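/- Let A ⊂ ℝ² be a finite point set in general position whose convex hull is two-dimensional, let p ∈ A be an interior point of A, and let T' be a triangulation of A∖{p}. For each integer i ≥ 3, the number h_i of triangulations of A in which p has degree i and which are obtained by inserting p into T' satisfies h_i ≤ C_{i−1} − C_{i−2}, where C_m denotes the m-th Catalan number. In particular h_3 = 1, h_4 ≤ 3, h_5 ≤ 9 and h_6 ≤ 28. -/

import Mathlib

/-!
Let `T` be an insertion of `p` into `T'`, and let `abc` be the triangle of `T'` containing `p`.

*The neighbours of `p` determine `T`* (`Ctx.eq_of_nbrs`). The triangles at `p` join neighbours that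
are consecutive in angular order. A triangle of `T` avoiding `p` contains no point of `A` except its
corners and has its edges in `T'`, so it is a triangle of `T'` (`Ctx.face_mem`). The underlying
spaces agree, so two insertions with the same star of `p` coincide.

*The neighbourhood of `p` unfolds as a binary tree.* The corners `a`, `b`, `c` are always neighbours
of `p` (`Ctx.root_nbr`), since an edge of `T` separating `p` from a corner would be an edge of `T'`
through the interior of `abc`. Let more generally `ab` be an edge of `T'` joining two neighbours of
`p`, with no point of `A` between `p` and `ab`. If `p` has another neighbour in the cone over `ab`,
then the apex `c` of the triangle of `T'` beyond `ab` lies in that cone and is a neighbour of `p`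
(`Ctx.descend`): otherwise some edge of `T`, hence of `T'`, avoiding `p` enters that triangle. The
cone then splits at `c`, with the same hypotheses for `ac` and `cb`. Hence there are at most
`C_k` possibilities for a set of `k` neighbours in the cone (`Ctx.card_coneSets_le`), and at most
`∑ C_x C_y C_z = C_{i-1} - C_{i-2}` for the whole neighbourhood of size `i`, the sum being over
`x + y + z = i - 3` (`Ctx.card_nbrSets_le`, `catalan_triple`).

*Degree three is attained.* Replacing `abc` by the cone from `p` over its boundary gives a
triangulation (`Ctx.exists_degree_three`); the face intersections are computed in barycentric
coordinates of `abc`.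

All planar geometry is expressed by the sign of the signed area `orient`. Interiority of `p` is used
only to see that `A` and `A \ {p}` have the same convex hull (`Ctx.of_interior`).
-/


open Geometry
open scoped Classical

/-- The Euclidean plane `ℝ²`. -/
abbrev Plane : Type := EuclideanSpace ℝ (Fin 2)

/-- A triangulation of a finite point set `A ⊆ ℝ²` (whose convex hull is two-dimensional):
a geometric simplicial complex all of whose faces have at most 3 elements, whose underlying
space is the convex hull of `A`, and whose vertex set is exactly `A`. -/
def IsTriangulation (A : Finset Plane) (T : SimplicialComplex ℝ Plane) : Prop :=
  (∀ s ∈ T.faces, s.card ≤ 3) ∧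
  T.space = convexHull ℝ (A : Set Plane) ∧
  T.vertices = (A : Set Plane)

/-- The degree of a vertex `p` in a triangulation `T`: the number of edges
(faces with exactly 2 elements) of `T` containing `p`. -/
noncomputable def degree (T : SimplicialComplex ℝ Plane) (p : Plane) : ℕ :=
  Nat.card {s : Finset Plane | s ∈ T.faces ∧ s.card = 2 ∧ p ∈ s}

/-- A finite point set is in general position if no three of its points are collinear. -/
def InGeneralPosition (A : Finset Plane) : Prop :=
  ∀ x ∈ A, ∀ y ∈ A, ∀ z ∈ A, x ≠ y → y ≠ z → x ≠ z →
    ¬ Collinear ℝ ({x, y, z} : Set Plane)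

/-- A triangulation `T` of `A` is obtained by inserting the point `p` into a
triangulation `T'` of `A \ {p}` when every edge of `T` not containing `p` is an
edge of `T'`. -/
def ObtainedByInserting (A : Finset Plane) (p : Plane)
    (T' T : SimplicialComplex ℝ Plane) : Prop :=
  IsTriangulation A T ∧
  ∀ s ∈ T.faces, s.card = 2 → p ∉ s → s ∈ T'.faces

/-! ### Signed area -/

/-- Twice the signed area of the triangle `a b c`, positive when it is counterclockwise. -/
noncomputable def orient (a b c : Plane) : ℝ :=
  (b 0 - a 0) * (c 1 - a 1) - (b 1 - a 1) * (c 0 - a 0)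

theorem orient_rot (a b c : Plane) : orient a b c = orient b c a := by
  unfold orient; ring

theorem orient_swap (a b c : Plane) : orient a b c = -orient a c b := by
  unfold orient; ring

theorem orient_swap' (a b c : Plane) : orient a b c = -orient b a c := by
  unfold orient; ring

@[simp] theorem orient_self_left (a b : Plane) : orient a a b = 0 := by
  unfold orient; ring

@[simp] theorem orient_self_right (a b : Plane) : orient a b b = 0 := by
  unfold orient; ring

@[simp] theorem orient_self_mid (a b : Plane) : orient a b a = 0 := by
  unfold orient; ring

/-- The three-term Plücker relation for the directions from `p`. -/
theorem plucker (p x y z w : Plane) :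
    orient p x y * orient p z w - orient p x z * orient p y w
      + orient p x w * orient p y z = 0 := by
  unfold orient; ring

theorem orient_split (p a b q : Plane) :
    orient a b q = orient p a b - orient p a q - orient p q b := by
  unfold orient; ring

theorem orient_comb (a b u v : Plane) (α β : ℝ) (h : α + β = 1) :
    orient a b (α • u + β • v) = α * orient a b u + β * orient a b v := by
  obtain rfl : β = 1 - α := by linarith
  simp [orient]; ring

theorem orient_comb3 (a b u v w : Plane) (α β γ : ℝ) (h : α + β + γ = 1) :
    orient a b (α • u + β • v + γ • w)
      = α * orient a b u + β * orient a b v + γ * orient a b w := by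
  obtain rfl : γ = 1 - α - β := by linarith
  simp [orient]; ring

theorem orient_sum {ι : Type*} (a b : Plane) (s : Finset ι) (w : ι → ℝ) (f : ι → Plane)
    (hw : ∑ i ∈ s, w i = 1) :
    orient a b (∑ i ∈ s, w i • f i) = ∑ i ∈ s, w i * orient a b (f i) := by
  have h0 : ∀ k : Fin 2, (∑ i ∈ s, w i • f i) k = ∑ i ∈ s, w i * f i k := by
    intro k
    simp
  have ha : ∀ c : ℝ, c = ∑ i ∈ s, w i * c := by
    intro c; rw [← Finset.sum_mul, hw, one_mul]
  unfold orient
  rw [h0, h0, ha (a 1), ha (a 0), ← Finset.sum_sub_distrib, ← Finset.sum_sub_distrib,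
    Finset.mul_sum, Finset.mul_sum, ← Finset.sum_sub_distrib, ← ha (a 1), ← ha (a 0)]
  exact Finset.sum_congr rfl fun i _ => by ring

/-- Barycentric coordinates as quotients of signed areas. -/
theorem bary (a b c x : Plane) (h : orient a b c ≠ 0) :
    x = (orient b c x / orient a b c) • a + (orient c a x / orient a b c) • b
      + (orient a b x / orient a b c) • c := by
  ext i
  have : ∀ i : Fin 2, x i * orient a b c = orient b c x * a i + orient c a x * b i
      + orient a b x * c i := by
    intro i; fin_cases i <;> simp [orient] <;> ring
  simp only [PiLp.add_apply, PiLp.smul_apply, smul_eq_mul]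
  field_simp
  linarith [this i]

theorem orient_sum3 (a b c x : Plane) :
    orient b c x + orient c a x + orient a b x = orient a b c := by
  unfold orient; ring

theorem collinear_of_orient_eq_zero {a b c : Plane} (hab : a ≠ b) (h : orient a b c = 0) :
    Collinear ℝ ({a, b, c} : Set Plane) := by
  rw [collinear_iff_of_mem (p₀ := a) (by simp)]
  refine ⟨b - a, ?_⟩
  have key : ∃ t : ℝ, c = t • (b - a) + a := by
    by_cases h0 : b 0 = a 0
    · have h1 : b 1 - a 1 ≠ 0 := by
        intro h1
        apply hab
        ext i; fin_cases i
        · exact h0.symm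
        · simp; linarith
      refine ⟨(c 1 - a 1) / (b 1 - a 1), ?_⟩
      have h2 : c 0 - a 0 = 0 := by
        have : (b 1 - a 1) * (c 0 - a 0) = 0 := by
          unfold orient at h; rw [h0] at h; linarith
        exact (mul_eq_zero.1 this).resolve_left h1
      ext i; fin_cases i
      · simp [h0]; linarith
      · simp; field_simp; ring
    · have h1 : b 0 - a 0 ≠ 0 := sub_ne_zero.2 h0
      refine ⟨(c 0 - a 0) / (b 0 - a 0), ?_⟩
      ext i; fin_cases i
      · simp; field_simp; ring
      · simp; field_simp; unfold orient at h; linarith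
  obtain ⟨t, ht⟩ := key
  intro q hq
  simp only [Set.mem_insert_iff, Set.mem_singleton_iff] at hq
  rcases hq with rfl | rfl | rfl
  · exact ⟨0, by simp⟩
  · exact ⟨1, by simp⟩
  · exact ⟨t, by simpa using ht⟩

theorem InGeneralPosition.orient_ne {A : Finset Plane} (hg : InGeneralPosition A) {a b c : Plane}
    (ha : a ∈ A) (hb : b ∈ A) (hc : c ∈ A) (hab : a ≠ b) (hbc : b ≠ c) (hac : a ≠ c) :
    orient a b c ≠ 0 := fun h =>
  hg a ha b hb c hc hab hbc hac (collinear_of_orient_eq_zero hab h)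

theorem InGeneralPosition.affineIndependent {A : Finset Plane} (hg : InGeneralPosition A)
    {s : Finset Plane} (hs : s ⊆ A) (h3 : s.card ≤ 3) :
    AffineIndependent ℝ ((↑) : s → Plane) := by
  rcases Nat.lt_or_ge s.card 2 with h1 | h1
  · have : Subsingleton s := by
      rw [← Finset.card_le_one_iff_subsingleton_coe]; omega
    exact affineIndependent_of_subsingleton ℝ _
  rcases Nat.lt_or_ge s.card 3 with h2 | h2
  · obtain ⟨x, y, hxy, rfl⟩ := Finset.card_eq_two.1 (show s.card = 2 by omega)
    have := affineIndependent_of_ne ℝ hxy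
    have h := this.range
    rw [show Set.range ![x, y] = (({x, y} : Finset Plane) : Set Plane) by
      ext; simp [or_comm]] at h
    exact h
  · obtain ⟨x, y, z, hxy, hxz, hyz, rfl⟩ := Finset.card_eq_three.1 (show s.card = 3 by omega)
    have := (affineIndependent_iff_not_collinear_set (k := ℝ)).2
      (hg x (hs (by simp)) y (hs (by simp)) z (hs (by simp)) hxy hyz hxz)
    have h := this.range
    rw [show Set.range ![x, y, z] = (({x, y, z} : Finset Plane) : Set Plane) by
      ext; simp [or_comm, or_left_comm]] at h
    exact h

/-! ### Faces of a planar complex -/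

/-- A face whose relative interior meets another face is contained in it. -/
theorem face_subset_of_relint {K : SimplicialComplex ℝ Plane} {r s : Finset Plane}
    (hr : r ∈ K.faces) (hs : s ∈ K.faces) (w : Plane → ℝ) (hw : ∀ i ∈ r, 0 < w i)
    (h1 : ∑ i ∈ r, w i = 1) (hx : ∑ i ∈ r, w i • i ∈ convexHull ℝ (s : Set Plane)) : r ⊆ s := by
  have hxr : ∑ i ∈ r, w i • i ∈ convexHull ℝ (r : Set Plane) :=
    Finset.mem_convexHull'.2 ⟨w, fun i hi => (hw i hi).le, h1, rfl⟩
  have := K.inter_subset_convexHull hr hs ⟨hxr, hx⟩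
  rw [← Finset.coe_inter, Finset.mem_convexHull'] at this
  obtain ⟨v, hv0, hv1, hv⟩ := this
  intro i hi
  by_contra his
  -- Both weightings of the point, extended by zero to `r`, agree by affine independence.
  set v' : Plane → ℝ := fun j => if j ∈ s then v j else 0 with hv'
  have hsum := AffineIndependent.eq_of_sum_eq_sum_subtype (K.indep hr) (w₁ := w) (w₂ := v')
    (by rw [h1, hv', ← Finset.sum_filter, Finset.filter_mem_eq_inter, hv1])
    (by
      rw [← hv]
      simp only [hv', ite_smul, zero_smul]
      rw [← Finset.sum_filter, Finset.filter_mem_eq_inter])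
  have := hsum i hi
  simp only [hv', if_neg his] at this
  exact (hw i hi).ne' this

theorem mem_hull_pair {u v : Plane} {α β : ℝ} (hα : 0 ≤ α) (hβ : 0 ≤ β) (h : α + β = 1)
    {s : Set Plane} (hu : u ∈ s) (hv : v ∈ s) : α • u + β • v ∈ convexHull ℝ s :=
  convex_convexHull ℝ s (subset_convexHull ℝ s hu) (subset_convexHull ℝ s hv) hα hβ h

theorem edge_subset_of_mem {K : SimplicialComplex ℝ Plane} {u v : Plane} {s : Finset Plane}
    (hr : {u, v} ∈ K.faces) (hs : s ∈ K.faces) {α β : ℝ} (hα : 0 < α) (hβ : 0 < β)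
    (h : α + β = 1) (hx : α • u + β • v ∈ convexHull ℝ (s : Set Plane)) : u ∈ s ∧ v ∈ s := by
  by_cases huv : u = v
  · subst huv
    have : α • u + β • u = u := by rw [← add_smul, h, one_smul]
    rw [this] at hx
    have hu : u ∈ K.vertices := by simpa [SimplicialComplex.mem_vertices] using hr
    have := (K.vertex_mem_convexHull_iff hu hs).1 hx
    exact ⟨this, this⟩
  · have := face_subset_of_relint hr hs (fun i => if i = u then α else β)
      (by intro i _; split_ifs <;> assumption)
      (by rw [Finset.sum_pair huv]; simp [Ne.symm huv, h])
      (by rw [Finset.sum_pair huv]; simpa [Ne.symm huv] using hx)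
    exact ⟨this (by simp), this (by simp)⟩

theorem ne_of_orient_pos {a b c : Plane} (h : 0 < orient a b c) : a ≠ b ∧ a ≠ c ∧ b ≠ c := by
  refine ⟨?_, ?_, ?_⟩ <;> rintro rfl <;> simp at h

theorem triangle_subset_of_mem {K : SimplicialComplex ℝ Plane} {a b c x : Plane} {s : Finset Plane}
    (hr : {a, b, c} ∈ K.faces) (hs : s ∈ K.faces) (h1 : 0 < orient a b x) (h2 : 0 < orient b c x)
    (h3 : 0 < orient c a x) (hx : x ∈ convexHull ℝ (s : Set Plane)) : a ∈ s ∧ b ∈ s ∧ c ∈ s := by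
  have hD : 0 < orient a b c := by rw [← orient_sum3 a b c x]; positivity
  obtain ⟨hab, hac, hbc⟩ := ne_of_orient_pos hD
  have hb := bary a b c x hD.ne'
  have hsum := orient_sum3 a b c x
  have e : ∀ f : Plane → ℝ, ∑ i ∈ ({a, b, c} : Finset Plane), f i = f a + f b + f c := by
    intro f
    rw [Finset.sum_insert (by simp [hab, hac]), Finset.sum_pair hbc]; ring
  have e' : ∀ f : Plane → Plane, ∑ i ∈ ({a, b, c} : Finset Plane), f i = f a + f b + f c := by
    intro f
    rw [Finset.sum_insert (by simp [hab, hac]), Finset.sum_pair hbc]; abel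
  have := face_subset_of_relint hr hs
    (fun i => if i = a then orient b c x / orient a b c else
      if i = b then orient c a x / orient a b c else orient a b x / orient a b c)
    (by intro i _; split_ifs <;> positivity)
    (by rw [e]; simp [hab.symm, hac.symm, hbc.symm]; field_simp; linarith)
    (by rw [e']; simp only [hab.symm, hac.symm, hbc.symm, if_true, if_false]; rwa [← hb])
  exact ⟨this (by simp), this (by simp), this (by simp)⟩

/-- A face that carries the initial part of the segment from `z` to `z + d`. -/
theorem exists_face_dir {K : SimplicialComplex ℝ Plane} (hf : K.faces.Finite) (z d : Plane)
    (h : ∀ ε : ℝ, 0 < ε → ε ≤ 1 → z + ε • d ∈ K.space) :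
    ∃ s ∈ K.faces, z ∈ convexHull ℝ (s : Set Plane) ∧
      ∃ ε : ℝ, 0 < ε ∧ z + ε • d ∈ convexHull ℝ (s : Set Plane) := by
  set F := {s ∈ K.faces | z ∉ convexHull ℝ (s : Set Plane)} with hF
  have hFf : F.Finite := hf.subset fun s hs => hs.1
  have hcl : IsClosed (⋃ s ∈ F, convexHull ℝ (s : Set Plane)) :=
    hFf.isClosed_biUnion fun s _ => s.finite_toSet.isClosed_convexHull ℝ
  have hz : (⋃ s ∈ F, convexHull ℝ (s : Set Plane))ᶜ ∈ nhds z :=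
    hcl.isOpen_compl.mem_nhds (by simp [hF])
  have hc : Filter.Tendsto (fun ε : ℝ => z + ε • d) (nhdsWithin 0 (Set.Ioi 0)) (nhds z) := by
    have : Continuous (fun ε : ℝ => z + ε • d) := by fun_prop
    have h0 := this.tendsto 0
    simp only [zero_smul, add_zero] at h0
    exact h0.mono_left nhdsWithin_le_nhds
  have hI : Set.Ioc (0 : ℝ) 1 ∈ nhdsWithin (0 : ℝ) (Set.Ioi 0) := Ioc_mem_nhdsGT one_pos
  obtain ⟨ε, h1, h2⟩ := ((hc hz : _ ∈ _) |> fun h => Filter.inter_mem h hI |> Filter.nonempty_of_mem)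
  obtain ⟨s, hs, hx⟩ := SimplicialComplex.mem_space_iff.1 (h ε h2.1 h2.2)
  refine ⟨s, hs, ?_, ε, h2.1, hx⟩
  by_contra hzs
  exact h1 (Set.mem_biUnion (show s ∈ F from ⟨hs, hzs⟩) hx)

/-- Past an edge, on a side where the underlying space continues, there is a triangle. -/
theorem exists_triangle_side {K : SimplicialComplex ℝ Plane} (hf : K.faces.Finite)
    (hconv : Convex ℝ K.space) {a b q : Plane}
    (hab : {a, b} ∈ K.faces) (hq : q ∈ K.space) (h : 0 < orient a b q) :
    ∃ c, {a, b, c} ∈ K.faces ∧ 0 < orient a b c := by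
  set z : Plane := (1 / 2 : ℝ) • a + (1 / 2 : ℝ) • b with hz
  have hzs : z ∈ K.space := SimplicialComplex.convexHull_subset_space hab
    (mem_hull_pair (by norm_num) (by norm_num) (by norm_num) (by simp) (by simp))
  obtain ⟨s, hs, h1, ε, hε, h2⟩ := exists_face_dir hf z (q - z) (fun ε h0 h1 => by
    have := hconv hzs hq (sub_nonneg.2 h1) h0.le (by ring)
    convert this using 1; module)
  obtain ⟨has, hbs⟩ := edge_subset_of_mem hab hs (by norm_num) (by norm_num) (by norm_num) h1
  have hx : 0 < orient a b (z + ε • (q - z)) := by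
    have e : z + ε • (q - z) = (1 - ε) • z + ε • q := by module
    rw [e, orient_comb _ _ _ _ _ _ (by ring), hz, orient_comb _ _ _ _ _ _ (by norm_num)]
    simpa using mul_pos hε h
  obtain ⟨w, hw0, hw1, hw⟩ := Finset.mem_convexHull'.1 h2
  rw [← hw, orient_sum _ _ _ _ _ hw1] at hx
  obtain ⟨c, hc, hpos⟩ : ∃ c ∈ s, 0 < orient a b c := by
    by_contra! hcon
    exact absurd hx (not_lt.2 (Finset.sum_nonpos fun i hi =>
      mul_nonpos_of_nonneg_of_nonpos (hw0 i hi) (hcon i hi)))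
  have hne := ne_of_orient_pos hpos
  refine ⟨c, ?_, hpos⟩
  have hsub : ({a, b, c} : Finset Plane) ⊆ s := by
    intro i hi; simp only [Finset.mem_insert, Finset.mem_singleton] at hi
    rcases hi with rfl | rfl | rfl <;> assumption
  exact K.down_closed hs hsub (by simp)

/-! ### Local structure of a triangulation -/

theorem tri_rot (a b c : Plane) : ({a, b, c} : Finset Plane) = {b, c, a} := by
  ext; simp; tauto

theorem tri_swap (a b c : Plane) : ({a, b, c} : Finset Plane) = {a, c, b} := by
  ext; simp; tauto

theorem face_pair {K : SimplicialComplex ℝ Plane} {s : Finset Plane} (hs : s ∈ K.faces)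
    {a b : Plane} (ha : a ∈ s) (hb : b ∈ s) : {a, b} ∈ K.faces :=
  K.down_closed hs (by intro i; simp; rintro (rfl | rfl) <;> assumption) (by simp)

namespace IsTriangulation

variable {A : Finset Plane} {T : SimplicialComplex ℝ Plane}

theorem face_subset (h : IsTriangulation A T) {s : Finset Plane} (hs : s ∈ T.faces) : s ⊆ A := by
  intro x hx
  have : x ∈ T.vertices :=
    T.down_closed hs (Finset.singleton_subset_iff.2 hx) (Finset.singleton_nonempty x)
  rw [h.2.2] at this
  exact this

theorem finite (h : IsTriangulation A T) : T.faces.Finite :=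
  (A.powerset.finite_toSet).subset fun s hs => by simpa using h.face_subset hs

theorem convex (h : IsTriangulation A T) : Convex ℝ T.space := by
  rw [h.2.1]; exact convex_convexHull ℝ _

theorem mem_space (h : IsTriangulation A T) {a : Plane} (ha : a ∈ A) : a ∈ T.space := by
  rw [h.2.1]; exact subset_convexHull ℝ _ ha

theorem mem_of_mem_hull (h : IsTriangulation A T) {a : Plane} (ha : a ∈ A) {s : Finset Plane}
    (hs : s ∈ T.faces) (has : a ∈ convexHull ℝ (s : Set Plane)) : a ∈ s :=
  (T.vertex_mem_convexHull_iff (by rw [h.2.2]; exact ha) hs).1 has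

end IsTriangulation

theorem mem_hull_tri {a b c x : Plane} (hD : 0 < orient a b c) (h1 : 0 ≤ orient a b x)
    (h2 : 0 ≤ orient b c x) (h3 : 0 ≤ orient c a x) {s : Set Plane} (ha : a ∈ s) (hb : b ∈ s)
    (hc : c ∈ s) : x ∈ convexHull ℝ s := by
  rw [bary a b c x hD.ne']
  have hs := orient_sum3 a b c x
  have := (convex_convexHull ℝ s).sum_mem (t := Finset.univ)
    (w := ![orient b c x / orient a b c, orient c a x / orient a b c, orient a b x / orient a b c])
    (z := ![a, b, c])
    (by intro i _; fin_cases i <;> simp <;> positivity)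
    (by simp only [Fin.sum_univ_three]; simp; field_simp; linarith)
    (by intro i _; fin_cases i <;> exact subset_convexHull ℝ s (by assumption))
  rw [Fin.sum_univ_three] at this
  exact this

theorem IsTriangulation.mem_of_orient_nonneg {A : Finset Plane} {T : SimplicialComplex ℝ Plane}
    (h : IsTriangulation A T) {a b c q : Plane} (hf : {a, b, c} ∈ T.faces) (hq : q ∈ A)
    (hD : 0 < orient a b c) (h1 : 0 ≤ orient a b q) (h2 : 0 ≤ orient b c q)
    (h3 : 0 ≤ orient c a q) : q = a ∨ q = b ∨ q = c := by
  have := h.mem_of_mem_hull hq hf (mem_hull_tri hD h1 h2 h3 (by simp) (by simp) (by simp))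
  simpa using this

theorem exists_small {D D' : ℝ} (K K' : ℝ) (hD : 0 < D) (hD' : 0 < D') :
    ∃ ε : ℝ, 0 < ε ∧ ε < 1 ∧ 0 < (1 - ε) * D + ε * K ∧ 0 < (1 - ε) * D' + ε * K' := by
  have h : ∀ D K : ℝ, 0 < D → ∀ᶠ ε in nhdsWithin (0 : ℝ) (Set.Ioi 0), 0 < (1 - ε) * D + ε * K := by
    intro D K hD
    have hc : Continuous fun ε : ℝ => (1 - ε) * D + ε * K := by fun_prop
    have := hc.tendsto 0
    simp only [sub_zero, one_mul, zero_mul, add_zero] at this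
    exact (this.mono_left nhdsWithin_le_nhds).eventually (lt_mem_nhds hD)
  have hI : ∀ᶠ ε in nhdsWithin (0 : ℝ) (Set.Ioi 0), ε ∈ Set.Ioo (0 : ℝ) 1 :=
    Ioo_mem_nhdsGT one_pos
  obtain ⟨ε, h1, h2, h3⟩ := (hI.and ((h D K hD).and (h D' K' hD'))).exists
  exact ⟨ε, h1.1, h1.2, h2, h3⟩

/-- Either `pq` is an edge, or the ray from `p` to `q` enters a triangle at `p`. -/
theorem IsTriangulation.star_dir {A : Finset Plane} {T : SimplicialComplex ℝ Plane}
    (h : IsTriangulation A T) (hg : InGeneralPosition A) {p q : Plane} (hp : p ∈ A) (hq : q ∈ A)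
    (hpq : p ≠ q) : {p, q} ∈ T.faces ∨
      ∃ u w, {p, u, w} ∈ T.faces ∧ 0 < orient p u w ∧ 0 < orient p u q ∧ 0 < orient p q w := by
  obtain ⟨s, hs, hps, ε, hε, hx⟩ := exists_face_dir h.finite p (q - p) (fun ε h0 h1 => by
    have := h.convex (h.mem_space hp) (h.mem_space hq) (sub_nonneg.2 h1) h0.le (by ring)
    convert this using 1; module)
  replace hps := h.mem_of_mem_hull hp hs hps
  have hsA := h.face_subset hs
  by_cases hqs : q ∈ s
  · exact Or.inl (face_pair hs hps hqs)
  obtain ⟨m, hm0, hm1, hm⟩ := Finset.mem_convexHull'.1 hx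
  have key : ∀ u, ε * orient p u q = ∑ i ∈ s, m i * orient p u i := by
    intro u
    rw [← orient_sum _ _ _ _ _ hm1, hm, show p + ε • (q - p) = (1 - ε) • p + ε • q by module,
      orient_comb _ _ _ _ _ _ (by ring)]
    simp
  have hcard := h.1 s hs
  have hc2 : (s.erase p).card ≤ 2 := by rw [Finset.card_erase_of_mem hps]; omega
  have hins := Finset.insert_erase hps
  have hpo : ∀ u ∈ s.erase p, orient p u q ≠ 0 := fun u hu =>
    hg.orient_ne hp (hsA (Finset.mem_of_mem_erase hu)) hq (Finset.ne_of_mem_erase hu).symm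
      (by rintro rfl; exact hqs (Finset.mem_of_mem_erase hu)) hpq
  right
  rcases Nat.lt_or_ge (s.erase p).card 1 with h1 | h1
  · have : s.erase p = ∅ := Finset.card_eq_zero.1 (by omega)
    rw [this] at hins
    exfalso
    rw [← hins] at hx
    simp [sub_eq_zero, hε.ne', hpq.symm] at hx
  rcases Nat.lt_or_ge (s.erase p).card 2 with h2 | h2
  · obtain ⟨u, hu⟩ := Finset.card_eq_one.1 (show (s.erase p).card = 1 by omega)
    exfalso
    have hus : u ∈ s.erase p := by rw [hu]; simp
    have := key u
    rw [← hins, hu, Finset.sum_insert (by simpa using (Finset.ne_of_mem_erase hus).symm)] at this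
    simp [hε.ne', hpo u hus] at this
  · obtain ⟨u, w, huw, he⟩ := Finset.card_eq_two.1 (show (s.erase p).card = 2 by omega)
    have main : ∀ u w, u ≠ w → s.erase p = {u, w} → 0 < orient p u w →
        {p, u, w} ∈ T.faces ∧ 0 < orient p u w ∧ 0 < orient p u q ∧ 0 < orient p q w := by
      intro u w huw he hpos
      have hus : u ∈ s.erase p := by rw [he]; simp
      have hws : w ∈ s.erase p := by rw [he]; simp
      have hsum : ∀ f : Plane → ℝ, ∑ i ∈ s, f i = f p + f u + f w := by
        intro f
        rw [← hins, he, Finset.sum_insert (by rw [← he]; simp), Finset.sum_pair huw]; ring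
      have k1 := key u
      have k2 := key w
      rw [hsum] at k1 k2
      simp only [orient_self_mid, orient_self_right, mul_zero, add_zero, zero_add] at k1 k2
      have n1 : 0 ≤ orient p u q := by
        have : 0 ≤ ε * orient p u q := by
          rw [k1]; exact mul_nonneg (hm0 w (Finset.mem_of_mem_erase hws)) hpos.le
        exact nonneg_of_mul_nonneg_right this hε
      have n2 : 0 ≤ orient p q w := by
        have : 0 ≤ ε * orient p q w := by
          rw [orient_swap p q w, mul_neg, k2, orient_swap p w u]
          have := mul_nonneg (hm0 u (Finset.mem_of_mem_erase hus)) hpos.le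
          linarith
        exact nonneg_of_mul_nonneg_right this hε
      refine ⟨by rw [← he, hins]; exact hs, hpos, lt_of_le_of_ne n1 (hpo u hus).symm,
        lt_of_le_of_ne n2 fun h0 => hpo w hws ?_⟩
      rw [orient_swap, ← h0, neg_zero]
    have hus : u ∈ s.erase p := by rw [he]; simp
    have hws : w ∈ s.erase p := by rw [he]; simp
    have hne : orient p u w ≠ 0 := hg.orient_ne hp (hsA (Finset.mem_of_mem_erase hus))
      (hsA (Finset.mem_of_mem_erase hws)) (Finset.ne_of_mem_erase hus).symm huw
      (Finset.ne_of_mem_erase hws).symm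
    rcases lt_or_gt_of_ne hne with h0 | h0
    · exact ⟨w, u, main w u huw.symm (by rw [he, Finset.pair_comm])
        (by rw [orient_swap]; linarith)⟩
    · exact ⟨u, w, main u w huw he h0⟩

/-- The open convex cone with apex `p` spanned by the counterclockwise directions `a`, `b`. -/
def InCone (p a b x : Plane) : Prop := 0 < orient p a x ∧ 0 < orient p x b

/-- No edge at `p` enters the interior of a triangle at `p`. -/
theorem not_inCone_of_triangle {T : SimplicialComplex ℝ Plane} {p a b v : Plane}
    (hf : {p, a, b} ∈ T.faces) (hD : 0 < orient p a b) (hv : {p, v} ∈ T.faces) :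
    ¬ InCone p a b v := by
  rintro ⟨h1, h2⟩
  obtain ⟨ε, h0, h1', h3, -⟩ := exists_small (orient a b v) 1 hD one_pos
  have := (triangle_subset_of_mem (x := (1 - ε) • p + ε • v) hf hv
    (by rw [orient_comb _ _ _ _ _ _ (by ring)]; simpa using mul_pos h0 h1)
    (by rw [orient_comb _ _ _ _ _ _ (by ring), ← orient_rot]; exact h3)
    (by rw [orient_comb _ _ _ _ _ _ (by ring), orient_rot b p v]; simpa using mul_pos h0 h2)
    (mem_hull_pair (by linarith) h0.le (by ring) (by simp) (by simp))).2.1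
  simp only [Finset.mem_insert, Finset.mem_singleton] at this
  rcases this with rfl | rfl
  · simp at hD
  · simp at h1

/-- A point of the cone over `uw` beyond `uw` is joined to `p` by a segment that crosses `uw`. -/
theorem cross_point {p u w c : Plane} (h0 : 0 < orient p u w) (h1 : InCone p u w c)
    (h2 : orient u w c < 0) : ∃ α β t : ℝ, 0 < α ∧ 0 < β ∧ α + β = 1 ∧ 0 < t ∧ t < 1 ∧
      α • u + β • w = (1 - t) • p + t • c := by
  obtain ⟨h3, h4⟩ := h1
  have hs := orient_split p u w c
  have hS : 0 < orient p c w + orient p u c := by linarith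
  refine ⟨orient p c w / (orient p c w + orient p u c), orient p u c / (orient p c w + orient p u c),
    orient p u w / (orient p c w + orient p u c), by positivity, by positivity, by field_simp,
    by positivity, by rw [div_lt_one hS]; linarith, ?_⟩
  have : ∀ i : Fin 2, orient p c w * u i + orient p u c * w i
      = (orient p c w + orient p u c - orient p u w) * p i + orient p u w * c i := by
    intro i; fin_cases i <;> simp [orient] <;> ring
  ext i
  simp only [PiLp.add_apply, PiLp.smul_apply, smul_eq_mul]
  field_simp
  linarith [this i]

/-- A triangle at `p` has no further vertex between `p` and the opposite edge. -/
theorem IsTriangulation.orient_neg_of_inCone {A : Finset Plane} {T : SimplicialComplex ℝ Plane}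
    (h : IsTriangulation A T) {p u w c : Plane} (hf : {p, u, w} ∈ T.faces) (hc : c ∈ A)
    (hD : 0 < orient p u w) (h1 : InCone p u w c) : orient u w c < 0 := by
  by_contra! hcon
  obtain ⟨h3, h4⟩ := h1
  rcases h.mem_of_orient_nonneg hf hc hD h3.le hcon (by rw [orient_rot w p c]; exact h4.le)
    with rfl | rfl | rfl <;> simp at h3 h4

/-- Two triangles on the same side of a common edge coincide. -/
theorem apex_unique {T : SimplicialComplex ℝ Plane} {a b c c' : Plane} (hc : {a, c, b} ∈ T.faces)
    (hc' : {a, c', b} ∈ T.faces) (h : 0 < orient a c b) (h' : 0 < orient a c' b) : c' = c := by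
  obtain ⟨ε, h0, h1, h2, h3⟩ := exists_small (orient a c' c) (orient c' b c)
    (D := 1 / 2 * orient a c' b) (D' := 1 / 2 * orient a c' b) (by positivity) (by positivity)
  have e : ∀ u v, orient u v ((1 - ε) • ((1 / 2 : ℝ) • a + (1 / 2 : ℝ) • b) + ε • c)
      = (1 - ε) * (1 / 2 * orient u v a + 1 / 2 * orient u v b) + ε * orient u v c := by
    intro u v
    rw [orient_comb _ _ _ _ _ _ (by ring), orient_comb _ _ _ _ _ _ (by norm_num)]
  have := (triangle_subset_of_mem (x := (1 - ε) • ((1 / 2 : ℝ) • a + (1 / 2 : ℝ) • b) + ε • c)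
    hc' hc (by rw [e]; simpa using h2) (by rw [e, ← orient_rot a c' b]; simpa using h3)
    (by rw [e, orient_rot b a c]; simpa using mul_pos h0 h)
    (convex_convexHull ℝ _ (mem_hull_pair (by norm_num) (by norm_num) (by norm_num) (by simp)
      (by simp)) (subset_convexHull ℝ _ (by simp)) (by linarith) h0.le (by ring))).2.1
  simp only [Finset.mem_insert, Finset.mem_singleton] at this
  rcases this with rfl | rfl | rfl
  · simp at h'
  · rfl
  · simp at h'

/-! ### Unfolding the link of the inserted point -/

/-- The standing situation: `T'` triangulates `A \ {p}`, which has the same hull as `A`. -/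
structure Ctx (A : Finset Plane) (p : Plane) (T' : SimplicialComplex ℝ Plane) : Prop where
  gp : InGeneralPosition A
  hp : p ∈ A
  tri : IsTriangulation (A.erase p) T'
  hull : convexHull ℝ ((A.erase p : Finset Plane) : Set Plane) = convexHull ℝ (A : Set Plane)

/-- Every point of `A` in the open cone at `p` over the counterclockwise edge `ab` lies strictly
beyond the line `ab`. -/
def EmptyBelow (A : Finset Plane) (p a b : Plane) : Prop :=
  ∀ q ∈ A, InCone p a b q → orient a b q < 0

section cone

variable {p a b c q u w : Plane}

theorem InCone.ne_left (h : InCone p a b q) : q ≠ a := by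
  rintro rfl; simp [InCone] at h

theorem InCone.ne_right (h : InCone p a b q) : q ≠ b := by
  rintro rfl; simp [InCone] at h

theorem InCone.ne_apex (h : InCone p a b q) : q ≠ p := by
  rintro rfl; simp [InCone] at h

theorem InCone.mono_left (hD : 0 < orient p a b) (hc : InCone p a b c) (h : InCone p a c q) :
    InCone p a b q := by
  obtain ⟨h1, h2⟩ := h
  obtain ⟨h3, h4⟩ := hc
  refine ⟨h1, ?_⟩
  have := plucker p a q c b
  have e1 := mul_pos h1 h4
  have e2 := mul_pos hD h2
  exact pos_of_mul_pos_right (show 0 < orient p a c * orient p q b by linarith) h3.le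

theorem InCone.mono_right (hD : 0 < orient p a b) (hc : InCone p a b c) (h : InCone p c b q) :
    InCone p a b q := by
  obtain ⟨h1, h2⟩ := h
  obtain ⟨h3, h4⟩ := hc
  refine ⟨?_, h2⟩
  have := plucker p a c q b
  have e1 := mul_pos h3 h2
  have e2 := mul_pos hD h1
  exact pos_of_mul_pos_left (show 0 < orient p a q * orient p c b by linarith) h4.le

end cone

namespace Ctx

variable {A : Finset Plane} {p : Plane} {T' T : SimplicialComplex ℝ Plane}

theorem mem_erase (C : Ctx A p T') {s : Finset Plane} (hs : s ∈ T'.faces) {a : Plane}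
    (ha : a ∈ s) : a ∈ A ∧ a ≠ p :=
  ⟨Finset.mem_of_mem_erase (C.tri.face_subset hs ha), Finset.ne_of_mem_erase (C.tri.face_subset hs ha)⟩

/-- A point of `A` in the cone over `ac` that does not lie beyond `ac` would lie in the
triangle `acb` of `T'`. -/
theorem emptyBelow_left (C : Ctx A p T') {a b c : Plane} (E : EmptyBelow A p a b)
    (hf : {a, c, b} ∈ T'.faces) (hD : 0 < orient p a b) (hacb : 0 < orient a c b)
    (hc : InCone p a b c) : EmptyBelow A p a c := by
  intro q hq hqc
  by_contra! hcon
  have hqb := hc.mono_left hD hqc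
  have h1 := E q hq hqb
  have h2 : 0 ≤ orient c b q := by
    have id : orient p a c * orient c b q
        = orient a c q * orient p c b + orient p q c * orient a c b := by
      unfold orient; ring
    have := mul_nonneg hcon hc.2.le
    have := mul_pos hqc.2 hacb
    exact (pos_of_mul_pos_right (show 0 < orient p a c * orient c b q by linarith) hc.1.le).le
  rcases C.tri.mem_of_orient_nonneg hf (Finset.mem_erase.2 ⟨hqc.ne_apex, hq⟩) hacb hcon h2
    (by rw [orient_swap']; linarith) with h | h | h
  · exact hqc.ne_left h
  · exact hqc.ne_right h
  · exact hqb.ne_right h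

/-- The mirror image of `emptyBelow_left`. -/
theorem emptyBelow_right (C : Ctx A p T') {a b c : Plane} (E : EmptyBelow A p a b)
    (hf : {a, c, b} ∈ T'.faces) (hD : 0 < orient p a b) (hacb : 0 < orient a c b)
    (hc : InCone p a b c) : EmptyBelow A p c b := by
  intro q hq hqc
  by_contra! hcon
  have hqb := hc.mono_right hD hqc
  have h1 := E q hq hqb
  have h2 : 0 ≤ orient a c q := by
    have id : orient p c b * orient a c q
        = orient c b q * orient p a c + orient p c q * orient a c b := by
      unfold orient; ring
    have := mul_nonneg hcon hc.1.le
    have := mul_pos hqc.1 hacb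
    exact (pos_of_mul_pos_right (show 0 < orient p c b * orient a c q by linarith) hc.2.le).le
  rcases C.tri.mem_of_orient_nonneg hf (Finset.mem_erase.2 ⟨hqc.ne_apex, hq⟩) hacb h2 hcon
    (by rw [orient_swap']; linarith) with h | h | h
  · exact hqb.ne_left h
  · exact hqc.ne_left h
  · exact hqc.ne_right h

/-- If the neighbours of `p` include `a`, `b` and some point of the open cone over the edge `ab`
of `T'`, then the apex of the triangle of `T'` beyond `ab` lies in that cone and is itself a
neighbour of `p`. -/
theorem descend (C : Ctx A p T') (hT : ObtainedByInserting A p T' T) {a b v : Plane}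
    (hD : 0 < orient p a b) (hab : {a, b} ∈ T'.faces) (E : EmptyBelow A p a b)
    (ha : {p, a} ∈ T.faces) (hb : {p, b} ∈ T.faces) (hv : {p, v} ∈ T.faces)
    (hvc : InCone p a b v) :
    ∃ c, {a, c, b} ∈ T'.faces ∧ 0 < orient a c b ∧ InCone p a b c ∧ {p, c} ∈ T.faces := by
  have hA := hT.1
  have haA := C.mem_erase hab (a := a) (by simp)
  have hbA := C.mem_erase hab (a := b) (by simp)
  have hvA : v ∈ A := hA.face_subset hv (by simp)
  have hvb := E v hvA hvc
  obtain ⟨hpa, hpb, hab_ne⟩ := ne_of_orient_pos hD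
  have edge' : ∀ u w, u ≠ w → u ≠ p → w ≠ p → {u, w} ∈ T.faces → {u, w} ∈ T'.faces := by
    intro u w huw hup hwp hf
    exact hT.2 _ hf (Finset.card_pair huw) (by simp [hup.symm, hwp.symm])
  -- `pv` crosses `ab`, so `ab` is not an edge of `T`.
  have hnab : {a, b} ∉ T.faces := by
    intro hf
    obtain ⟨α, β, t, hα, hβ, h1, ht0, ht1, he⟩ := cross_point hD hvc hvb
    have := (edge_subset_of_mem hf hv hα hβ h1
      (by rw [he]; exact mem_hull_pair (by linarith) ht0.le (by ring) (by simp) (by simp))).1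
    simp only [Finset.mem_insert, Finset.mem_singleton] at this
    rcases this with h | h
    · exact hpa h.symm
    · exact hvc.ne_left h.symm
  obtain ⟨c, hcf, hcpos⟩ := exists_triangle_side C.tri.finite C.tri.convex
    (a := b) (b := a) (q := v) (by rwa [Finset.pair_comm])
    (by rw [C.tri.2.1, C.hull]; exact subset_convexHull ℝ _ hvA) (by rw [orient_swap']; linarith)
  have hacb : 0 < orient a c b := by rw [← orient_rot b a c]; exact hcpos
  have hf : {a, c, b} ∈ T'.faces := by rw [← tri_rot]; exact hcf
  have hcA := C.mem_erase hf (a := c) (by simp)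
  obtain ⟨hac, -, hcb⟩ := ne_of_orient_pos hacb
  -- An edge of `T` issuing from `a` or `b` into the open triangle `acb` is impossible.
  have hca : 0 < orient p a c := by
    by_contra! hcon
    have hlt : orient p a c < 0 :=
      lt_of_le_of_ne hcon (C.gp.orient_ne C.hp haA.1 hcA.1 hpa hac hcA.2.symm)
    obtain ⟨u, huf, hu⟩ := exists_triangle_side hA.finite hA.convex ha (hA.mem_space hbA.1) hD
    obtain ⟨-, hpu, hau⟩ := ne_of_orient_pos hu
    have huA : u ∈ A := hA.face_subset huf (by simp)
    have hub : u ≠ b := by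
      rintro rfl; exact hnab (face_pair huf (by simp) (by simp))
    have hub' : 0 < orient p u b := by
      by_contra! h
      have := lt_of_le_of_ne h (C.gp.orient_ne C.hp huA hbA.1 hpu hub hpb)
      exact not_inCone_of_triangle huf hu hb ⟨hD, by rw [orient_swap]; linarith⟩
    have hbel := E u huA ⟨hu, hub'⟩
    have hcu : 0 < orient a c u := by
      have id : orient p a b * orient a c u = orient p a c * orient a b u
          + orient p a u * orient a c b := by unfold orient; ring
      have := mul_pos_of_neg_of_neg hlt hbel
      have := mul_pos hu hacb
      exact pos_of_mul_pos_right (show 0 < orient p a b * orient a c u by linarith) hD.le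
    obtain ⟨ε, h0, h1, h2, -⟩ := exists_small (orient c b u) 1 hacb one_pos
    have := (triangle_subset_of_mem (x := (1 - ε) • a + ε • u) hf
      (edge' a u hau hpa.symm hpu.symm (face_pair huf (by simp) (by simp)))
      (by rw [orient_comb _ _ _ _ _ _ (by ring)]; simpa using mul_pos h0 hcu)
      (by rw [orient_comb _ _ _ _ _ _ (by ring), ← orient_rot]; exact h2)
      (by rw [orient_comb _ _ _ _ _ _ (by ring), orient_swap' b a u]; simp; nlinarith)
      (mem_hull_pair (by linarith) h0.le (by ring) (by simp) (by simp))).2.2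
    simp only [Finset.mem_insert, Finset.mem_singleton] at this
    rcases this with h | h
    · exact hab_ne h.symm
    · exact hub h.symm
  have hcb' : 0 < orient p c b := by
    by_contra! hcon
    have hlt : orient p c b < 0 :=
      lt_of_le_of_ne hcon (C.gp.orient_ne C.hp hcA.1 hbA.1 hcA.2.symm hcb hpb)
    obtain ⟨u, huf, hu⟩ := exists_triangle_side hA.finite hA.convex (a := b) (b := p) (q := a)
      (by rwa [Finset.pair_comm]) (hA.mem_space haA.1) (by rw [← orient_rot, ← orient_rot]; exact hD)
    obtain ⟨-, hbu, hpu⟩ := ne_of_orient_pos hu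
    have hu' : 0 < orient p u b := by rw [← orient_rot]; exact hu
    have huA : u ∈ A := hA.face_subset huf (by simp)
    have hua : u ≠ a := by
      rintro rfl; exact hnab (face_pair huf (by simp) (by simp))
    have hau' : 0 < orient p a u := by
      by_contra! h
      have := lt_of_le_of_ne h (C.gp.orient_ne C.hp haA.1 huA hpa hua.symm hpu)
      exact not_inCone_of_triangle (by rw [← tri_rot]; exact huf) hu' ha
        ⟨by rw [orient_swap]; linarith, hD⟩
    have hbel := E u huA ⟨hau', hu'⟩
    have hcu : 0 < orient c b u := by
      have id : orient p a b * orient c b u = orient p c b * orient a b u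
          + orient p u b * orient a c b := by unfold orient; ring
      have := mul_pos_of_neg_of_neg hlt hbel
      have := mul_pos hu' hacb
      exact pos_of_mul_pos_right (show 0 < orient p a b * orient c b u by linarith) hD.le
    obtain ⟨ε, h0, h1, h2, -⟩ := exists_small (orient a c u) 1 hacb one_pos
    have := (triangle_subset_of_mem (x := (1 - ε) • b + ε • u) hf
      (edge' b u hbu hpb.symm hpu.symm (face_pair huf (by simp) (by simp)))
      (by rw [orient_comb _ _ _ _ _ _ (by ring)]; exact h2)
      (by rw [orient_comb _ _ _ _ _ _ (by ring)]; simpa using mul_pos h0 hcu)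
      (by rw [orient_comb _ _ _ _ _ _ (by ring), orient_swap' b a u]; simp; nlinarith)
      (mem_hull_pair (by linarith) h0.le (by ring) (by simp) (by simp))).1
    simp only [Finset.mem_insert, Finset.mem_singleton] at this
    rcases this with h | h
    · exact hab_ne h
    · exact hua h.symm
  refine ⟨c, hf, hacb, ⟨hca, hcb'⟩, ?_⟩
  rcases hA.star_dir C.gp C.hp hcA.1 hcA.2.symm with h | ⟨u, w, huwf, huw, huc, hcw⟩
  · exact h
  -- Otherwise an edge `uw` of the link of `p` crosses `pc` beyond `ab`.
  exfalso
  obtain ⟨hpu, hpw, huw_ne⟩ := ne_of_orient_pos huw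
  have huA : u ∈ A := hA.face_subset huwf (by simp)
  have hwA : w ∈ A := hA.face_subset huwf (by simp)
  have hneg := hA.orient_neg_of_inCone huwf hcA.1 huw ⟨huc, hcw⟩
  have hu1 : u = a ∨ 0 < orient p a u := by
    by_contra! hcon
    have h1 : orient p a u < 0 :=
      lt_of_le_of_ne hcon.2 (C.gp.orient_ne C.hp haA.1 huA hpa hcon.1.symm hpu)
    have h2 : 0 < orient p u a := by rw [orient_swap]; linarith
    refine not_inCone_of_triangle huwf huw ha ⟨h2, ?_⟩
    have := plucker p u a c w
    have := mul_pos h2 hcw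
    have := mul_pos huw hca
    exact pos_of_mul_pos_right (show 0 < orient p u c * orient p a w by linarith) huc.le
  have hw1 : w = b ∨ 0 < orient p w b := by
    by_contra! hcon
    have h1 : orient p w b < 0 :=
      lt_of_le_of_ne hcon.2 (C.gp.orient_ne C.hp hwA hbA.1 hpw hcon.1 hpb)
    have h2 : 0 < orient p b w := by rw [orient_swap]; linarith
    refine not_inCone_of_triangle huwf huw hb ⟨?_, h2⟩
    have := plucker p u c b w
    have := mul_pos huc h2
    have := mul_pos huw hcb'
    exact pos_of_mul_pos_left (show 0 < orient p u b * orient p c w by linarith) hcw.le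
  have hu2 : u = a ∨ orient a b u < 0 := by
    refine hu1.imp id fun h => E u huA ⟨h, ?_⟩
    have := plucker p a u c b
    have := mul_pos h hcb'
    have := mul_pos hD huc
    exact pos_of_mul_pos_right (show 0 < orient p a c * orient p u b by linarith) hca.le
  have hw2 : w = b ∨ orient a b w < 0 := by
    refine hw1.imp id fun h => E w hwA ⟨?_, h⟩
    have := plucker p a c w b
    have := mul_pos hca h
    have := mul_pos hD hcw
    exact pos_of_mul_pos_left (show 0 < orient p a w * orient p c b by linarith) hcb'.le
  have huwT : {u, w} ∈ T.faces := face_pair huwf (by simp) (by simp)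
  obtain ⟨α, β, t, hα, hβ, h1, ht0, ht1, he⟩ := cross_point huw ⟨huc, hcw⟩ hneg
  have hlast : 0 < orient b a (α • u + β • w) := by
    rw [orient_comb _ _ _ _ _ _ h1, orient_swap' b a u, orient_swap' b a w]
    rcases hu2 with rfl | hu2
    · rcases hw2 with rfl | hw2
      · exact absurd huwT hnab
      · simp; nlinarith
    · rcases hw2 with rfl | hw2
      · simp; nlinarith
      · nlinarith
  have := (triangle_subset_of_mem (x := α • u + β • w) hf
      (edge' u w huw_ne hpu.symm hpw.symm huwT)
      (by rw [he, orient_comb _ _ _ _ _ _ (by ring), ← orient_rot p a c]; simp; nlinarith)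
      (by rw [he, orient_comb _ _ _ _ _ _ (by ring), ← orient_rot p c b]; simp; nlinarith)
      hlast (mem_hull_pair hα.le hβ.le h1 (by simp) (by simp))).2.1
  simp only [Finset.mem_insert, Finset.mem_singleton] at this
  rcases this with rfl | rfl
  · simp at huc
  · simp at hcw

/-- The corners of the triangle of `T'` containing `p` are neighbours of `p`. -/
theorem root_nbr (C : Ctx A p T') (hT : ObtainedByInserting A p T' T) {a b c : Plane}
    (hf : {a, b, c} ∈ T'.faces) (h1 : 0 < orient a b p) (h2 : 0 < orient b c p)
    (h3 : 0 < orient c a p) : {p, a} ∈ T.faces := by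
  have hA := hT.1
  have hD : 0 < orient a b c := by rw [← orient_sum3 a b c p]; positivity
  have haA := C.mem_erase hf (a := a) (by simp)
  rcases hA.star_dir C.gp C.hp haA.1 haA.2.symm with h | ⟨u, w, huwf, huw, hua, haw⟩
  · exact h
  exfalso
  obtain ⟨hpu, hpw, huw_ne⟩ := ne_of_orient_pos huw
  have hneg := hA.orient_neg_of_inCone huwf haA.1 huw ⟨hua, haw⟩
  obtain ⟨α, β, t, hα, hβ, hs, ht0, ht1, he⟩ := cross_point huw ⟨hua, haw⟩ hneg
  have := (triangle_subset_of_mem (x := α • u + β • w) hf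
      (hT.2 {u, w} (face_pair huwf (by simp) (by simp)) (Finset.card_pair huw_ne)
        (by simp [hpu, hpw]))
      (by rw [he, orient_comb _ _ _ _ _ _ (by ring)]; simp; nlinarith)
      (by rw [he, orient_comb _ _ _ _ _ _ (by ring), ← orient_rot a b c]; nlinarith)
      (by rw [he, orient_comb _ _ _ _ _ _ (by ring)]; simp; nlinarith)
      (mem_hull_pair hα.le hβ.le hs (by simp) (by simp))).1
  simp only [Finset.mem_insert, Finset.mem_singleton] at this
  rcases this with rfl | rfl
  · simp at hua
  · simp at haw

/-- The part of the triangle `abc` of `T'` seen from `p` across `ab` contains no point of `A`. -/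
theorem root_emptyBelow (C : Ctx A p T') {a b c : Plane}
    (hf : {a, b, c} ∈ T'.faces) (h1 : 0 < orient a b p) (h2 : 0 < orient b c p)
    (h3 : 0 < orient c a p) : EmptyBelow A p a b := by
  intro q hq hqc
  by_contra! hcon
  have hD : 0 < orient a b c := by rw [← orient_sum3 a b c p]; positivity
  have hpab : 0 < orient p a b := by rw [orient_rot]; exact h1
  have e1 : 0 ≤ orient b c q := by
    have id : orient p a b * orient b c q = orient p q b * orient a b c
        + orient a b q * orient b c p := by unfold orient; ring
    have := mul_pos hqc.2 hD
    have := mul_nonneg hcon h2.le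
    exact (pos_of_mul_pos_right (show 0 < orient p a b * orient b c q by linarith) hpab.le).le
  have e2 : 0 ≤ orient c a q := by
    have id : orient p a b * orient c a q = orient p a q * orient a b c
        + orient a b q * orient c a p := by unfold orient; ring
    have := mul_pos hqc.1 hD
    have := mul_nonneg hcon h3.le
    exact (pos_of_mul_pos_right (show 0 < orient p a b * orient c a q by linarith) hpab.le).le
  rcases C.tri.mem_of_orient_nonneg hf (Finset.mem_erase.2 ⟨hqc.ne_apex, hq⟩) hD hcon e1 e2
    with h | h | h
  · exact hqc.ne_left h
  · exact hqc.ne_right h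
  · -- `c` lies in the cone opposite to the one over `ab`.
    subst h
    have := hqc.1
    rw [orient_rot, orient_swap'] at this
    linarith

end Ctx

/-! ### The neighbours of the inserted point determine the triangulation -/

/-- The segment from the centroid `z` of `abc` to `v` meets the edge `ab` when `ab` is the edge
separating `v` most. -/
theorem exists_mem_edge {a b c v z : Plane} (hD : 0 < orient a b c)
    (hz : z = (1 / 3 : ℝ) • a + (1 / 3 : ℝ) • b + (1 / 3 : ℝ) • c) (h : orient a b v < 0)
    (h1 : orient a b v ≤ orient b c v) (h2 : orient a b v ≤ orient c a v) :
    ∃ t : ℝ, 0 < t ∧ t < 1 ∧ (1 - t) • z + t • v ∈ convexHull ℝ ({a, b} : Set Plane) := by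
  set m := orient a b v with hm
  have hE : 0 < orient a b c / 3 - m := by linarith
  set t := orient a b c / 3 / (orient a b c / 3 - m) with ht
  have ht0 : 0 < t := by positivity
  have ht1 : t < 1 := by rw [ht, div_lt_one hE]; linarith
  have key : (1 - t) * (orient a b c / 3) + t * m = 0 := by
    have : t * (orient a b c / 3 - m) = orient a b c / 3 := div_mul_cancel₀ _ hE.ne'
    linarith
  refine ⟨t, ht0, ht1, ?_⟩
  have e : ∀ x y, orient x y ((1 - t) • z + t • v)
      = (1 - t) * (1 / 3 * orient x y a + 1 / 3 * orient x y b + 1 / 3 * orient x y c)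
        + t * orient x y v := by
    intro x y
    rw [orient_comb _ _ _ _ _ _ (by ring), hz, orient_comb3 _ _ _ _ _ _ _ _ (by norm_num)]
  have e1 : orient a b ((1 - t) • z + t • v) = 0 := by
    rw [e, ← hm]; simp; linarith
  have e2 : 0 ≤ orient b c ((1 - t) • z + t • v) := by
    rw [e, ← orient_rot a b c]; simp; nlinarith
  have e3 : 0 ≤ orient c a ((1 - t) • z + t • v) := by
    rw [e, orient_rot c a b]; simp; nlinarith
  have hs := orient_sum3 a b c ((1 - t) • z + t • v)
  rw [bary a b c ((1 - t) • z + t • v) hD.ne', e1, zero_div, zero_smul, add_zero]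
  exact mem_hull_pair (by positivity) (by positivity) (by field_simp; linarith) (by simp) (by simp)

/-- A point of a face lies in the relative interior of a subface. -/
theorem exists_relint {K : SimplicialComplex ℝ Plane} {s : Finset Plane} (hs : s ∈ K.faces)
    {x : Plane} (hx : x ∈ convexHull ℝ (s : Set Plane)) :
    ∃ r ∈ K.faces, ∃ w : Plane → ℝ, (∀ i ∈ r, 0 < w i) ∧ ∑ i ∈ r, w i = 1 ∧
      ∑ i ∈ r, w i • i = x := by
  obtain ⟨w, hw0, hw1, hw⟩ := Finset.mem_convexHull'.1 hx
  have h1 : ∑ i ∈ s.filter (fun i => w i ≠ 0), w i = 1 := by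
    rw [Finset.sum_filter_ne_zero, hw1]
  refine ⟨s.filter (fun i => w i ≠ 0), K.down_closed hs (Finset.filter_subset _ _) ?_, w, ?_, h1, ?_⟩
  · rw [Finset.nonempty_iff_ne_empty]
    intro h; rw [h] at h1; simp at h1
  · intro i hi
    rw [Finset.mem_filter] at hi
    exact lt_of_le_of_ne (hw0 i hi.1) hi.2.symm
  · rw [← hw, Finset.sum_filter]
    refine Finset.sum_congr rfl fun i _ => ?_
    by_cases h : w i = 0 <;> simp [h]

namespace Ctx

variable {A : Finset Plane} {p : Plane} {T' T : SimplicialComplex ℝ Plane}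

/-- A triangle of `T` avoiding `p` is empty and has its edges in `T'`, hence belongs to `T'`. -/
theorem face_mem (C : Ctx A p T') (hT : ObtainedByInserting A p T' T) {s : Finset Plane}
    (hs : s ∈ T.faces) (hps : p ∉ s) : s ∈ T'.faces := by
  have hA := hT.1
  have hsA := hA.face_subset hs
  have hsA' : ∀ x ∈ s, x ∈ A.erase p := fun x hx =>
    Finset.mem_erase.2 ⟨by rintro rfl; exact hps hx, hsA hx⟩
  have hcard := hA.1 s hs
  have hpos : 0 < s.card := Finset.card_pos.2 (SimplicialComplex.nonempty_of_mem_faces hs)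
  rcases Nat.lt_or_ge s.card 2 with h1 | h1
  · obtain ⟨a, rfl⟩ := Finset.card_eq_one.1 (show s.card = 1 by omega)
    have : a ∈ T'.vertices := by rw [C.tri.2.2]; exact hsA' a (by simp)
    exact this
  rcases Nat.lt_or_ge s.card 3 with h2 | h2
  · exact hT.2 s hs (by omega) hps
  have main : ∀ a b c, s = {a, b, c} → 0 < orient a b c → s ∈ T'.faces := by
    intro a b c hsabc hD
    obtain ⟨z, hz⟩ : ∃ z : Plane, z = (1 / 3 : ℝ) • a + (1 / 3 : ℝ) • b + (1 / 3 : ℝ) • c := ⟨_, rfl⟩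
    have hza : 0 < orient a b z := by
      rw [hz, orient_comb3 _ _ _ _ _ _ _ _ (by norm_num)]; simpa using hD
    have hzb : 0 < orient b c z := by
      rw [hz, orient_comb3 _ _ _ _ _ _ _ _ (by norm_num), ← orient_rot]; simpa using hD
    have hzc : 0 < orient c a z := by
      rw [hz, orient_comb3 _ _ _ _ _ _ _ _ (by norm_num), orient_rot c a b]; simpa using hD
    have hzs : z ∈ convexHull ℝ (s : Set Plane) :=
      mem_hull_tri hD hza.le hzb.le hzc.le (by simp [hsabc]) (by simp [hsabc]) (by simp [hsabc])
    have hzT' : z ∈ T'.space := by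
      rw [C.tri.2.1, C.hull]
      exact convexHull_mono (by exact_mod_cast hsA) hzs
    obtain ⟨r₀, hr₀, hzr₀⟩ := SimplicialComplex.mem_space_iff.1 hzT'
    obtain ⟨r, hr, w, hw0, hw1, hw⟩ := exists_relint hr₀ hzr₀
    by_cases hall : ∀ v ∈ r, v ∈ s
    · have hrT : r ∈ T.faces :=
        T.down_closed hs hall (SimplicialComplex.nonempty_of_mem_faces hr)
      obtain ⟨ha, hb, hc⟩ := triangle_subset_of_mem (by rw [← hsabc]; exact hs) hrT hza hzb hzc
        (Finset.mem_convexHull'.2 ⟨w, fun i hi => (hw0 i hi).le, hw1, hw⟩)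
      have : s = r := by
        refine Finset.Subset.antisymm ?_ hall
        rw [hsabc]; intro i; simp; rintro (rfl | rfl | rfl) <;> assumption
      rw [this]; exact hr
    · exfalso
      push Not at hall
      obtain ⟨v, hvr, hvs⟩ := hall
      have hvA := C.mem_erase hr hvr
      -- The segment from `z` to `v` leaves `s` through an edge, inside the open face `r`.
      have leaves : ∀ a b c, s = {a, b, c} → 0 < orient a b c →
          z = (1 / 3 : ℝ) • a + (1 / 3 : ℝ) • b + (1 / 3 : ℝ) • c → orient a b v < 0 →
          orient a b v ≤ orient b c v → orient a b v ≤ orient c a v → False := by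
        intro a b c hsabc hD hz h1 h2 h3
        obtain ⟨t, ht0, ht1, hy⟩ := exists_mem_edge hD hz h1 h2 h3
        obtain ⟨hab, -, -⟩ := ne_of_orient_pos hD
        have has : a ∈ s := by simp [hsabc]
        have hbs : b ∈ s := by simp [hsabc]
        have he : {a, b} ∈ T'.faces := hT.2 _ (face_pair hs has hbs) (Finset.card_pair hab)
          (by intro h; simp only [Finset.mem_insert, Finset.mem_singleton] at h
              rcases h with rfl | rfl <;> exact hps (by assumption))
        have := face_subset_of_relint hr he (fun i => (1 - t) * w i + if i = v then t else 0)
          (by intro i hi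
              have := mul_pos (sub_pos.2 ht1) (hw0 i hi)
              split_ifs <;> linarith)
          (by rw [Finset.sum_add_distrib, ← Finset.mul_sum, hw1]; simp [hvr])
          (by
            have : ∑ i ∈ r, ((1 - t) * w i + if i = v then t else 0) • i = (1 - t) • z + t • v := by
              simp only [add_smul, ite_smul, zero_smul, mul_smul]
              rw [Finset.sum_add_distrib, ← Finset.smul_sum, hw]; simp [hvr]
            rw [this]; simpa using hy)
        have := this hvr
        simp only [Finset.mem_insert, Finset.mem_singleton] at this
        rcases this with rfl | rfl <;> exact hvs (by assumption)
      have hneg : orient a b v < 0 ∨ orient b c v < 0 ∨ orient c a v < 0 := by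
        by_contra! hcon
        have := hA.mem_of_orient_nonneg (by rw [← hsabc]; exact hs) hvA.1 hD hcon.1 hcon.2.1 hcon.2.2
        exact hvs (by rw [hsabc]; simpa using this)
      have E1 := leaves a b c hsabc hD hz
      have E2 := leaves b c a (by rw [hsabc, tri_rot]) (by rw [← orient_rot]; exact hD)
        (by rw [hz]; abel)
      have E3 := leaves c a b (by rw [hsabc, tri_rot, tri_rot]) (by rw [orient_rot]; exact hD)
        (by rw [hz]; abel)
      by_cases k1 : orient a b v ≤ orient b c v ∧ orient a b v ≤ orient c a v
      · exact E1 (by rcases hneg with h | h | h <;> linarith [k1.1, k1.2]) k1.1 k1.2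
      by_cases k2 : orient b c v ≤ orient c a v ∧ orient b c v ≤ orient a b v
      · exact E2 (by rcases hneg with h | h | h <;> linarith [k2.1, k2.2]) k2.1 k2.2
      have k3 : orient c a v ≤ orient a b v ∧ orient c a v ≤ orient b c v := by
        by_contra k3
        simp only [not_and_or, not_le] at k1 k2 k3
        rcases k1 with k1 | k1 <;> rcases k2 with k2 | k2 <;> rcases k3 with k3 | k3 <;> linarith
      exact E3 (by rcases hneg with h | h | h <;> linarith [k3.1, k3.2]) k3.1 k3.2
  obtain ⟨a, b, c, hab, hac, hbc, habc⟩ := Finset.card_eq_three.1 (show s.card = 3 by omega)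
  have hne : orient a b c ≠ 0 := C.gp.orient_ne (hsA (by simp [habc])) (hsA (by simp [habc]))
    (hsA (by simp [habc])) hab hbc hac
  rcases lt_or_gt_of_ne hne with h | h
  · exact main a c b (by rw [habc, tri_swap]) (by rw [orient_swap]; linarith)
  · exact main a b c habc h

/-- The triangles at `p` join neighbours of `p` that are consecutive in angular order, so the
neighbours of `p` determine its star. -/
theorem star_subset (C : Ctx A p T') {T₁ : SimplicialComplex ℝ Plane}
    (hT : ObtainedByInserting A p T' T) (hT₁ : ObtainedByInserting A p T' T₁)
    (hn : ∀ v, {p, v} ∈ T.faces ↔ {p, v} ∈ T₁.faces) {s : Finset Plane} (hs : s ∈ T.faces)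
    (hps : p ∈ s) : s ∈ T₁.faces := by
  have hA := hT.1
  have hA₁ := hT₁.1
  have hsA := hA.face_subset hs
  have hcard := hA.1 s hs
  have hc2 : (s.erase p).card ≤ 2 := by rw [Finset.card_erase_of_mem hps]; omega
  have hins := Finset.insert_erase hps
  rcases Nat.lt_or_ge (s.erase p).card 1 with h1 | h1
  · have : s.erase p = ∅ := Finset.card_eq_zero.1 (by omega)
    rw [this] at hins
    have hp : p ∈ T₁.vertices := by rw [hA₁.2.2]; exact C.hp
    rw [← hins]; exact hp
  rcases Nat.lt_or_ge (s.erase p).card 2 with h2 | h2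
  · obtain ⟨u, hu⟩ := Finset.card_eq_one.1 (show (s.erase p).card = 1 by omega)
    rw [hu] at hins
    rw [← hins] at hs ⊢
    exact (hn u).1 hs
  · obtain ⟨a, b, hab, he⟩ := Finset.card_eq_two.1 (show (s.erase p).card = 2 by omega)
    have hmem : ∀ x ∈ ({a, b} : Finset Plane), x ∈ A ∧ x ≠ p := by
      intro x hx
      rw [← he] at hx
      exact ⟨hsA (Finset.mem_of_mem_erase hx), Finset.ne_of_mem_erase hx⟩
    have main : ∀ a b, a ≠ b → a ∈ A → b ∈ A → s = {p, a, b} → 0 < orient p a b →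
        {p, a, b} ∈ T₁.faces := by
      intro a b hab haA hbA hsab hD
      rw [hsab] at hs
      obtain ⟨hpa, hpb, -⟩ := ne_of_orient_pos hD
      have ha := face_pair hs (a := p) (b := a) (by simp) (by simp)
      have hb := face_pair hs (a := p) (b := b) (by simp) (by simp)
      obtain ⟨u, huf, hu⟩ := exists_triangle_side hA₁.finite hA₁.convex ((hn a).1 ha)
        (hA₁.mem_space hbA) hD
      obtain ⟨-, hpu, hau⟩ := ne_of_orient_pos hu
      have huA : u ∈ A := hA₁.face_subset huf (by simp)
      by_cases hub : u = b
      · rw [← hub]; exact huf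
      exfalso
      rcases lt_or_gt_of_ne (C.gp.orient_ne C.hp huA hbA hpu hub hpb) with h | h
      · exact not_inCone_of_triangle huf hu ((hn b).1 hb) ⟨hD, by rw [orient_swap]; linarith⟩
      · exact not_inCone_of_triangle hs hD
          ((hn u).2 (face_pair huf (by simp) (by simp))) ⟨hu, h⟩
    have ha := hmem a (by simp)
    have hb := hmem b (by simp)
    rw [he] at hins
    rcases lt_or_gt_of_ne (C.gp.orient_ne C.hp ha.1 hb.1 ha.2.symm hab hb.2.symm) with h | h
    · rw [← hins, tri_swap]
      exact main b a hab.symm hb.1 ha.1 (by rw [← hins, tri_swap]) (by rw [orient_swap]; linarith)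
    · rw [← hins]
      exact main a b hab ha.1 hb.1 hins.symm h

/-- A face of `T` avoiding `p` lies in `T'`. Its barycentre lies in some face `r` of `T₁`, and `r`
belongs to `T` or to `T'` according to whether it contains `p`; in either complex the given face
is contained in `r`. -/
theorem faces_subset (C : Ctx A p T') {T₁ : SimplicialComplex ℝ Plane}
    (hT : ObtainedByInserting A p T' T) (hT₁ : ObtainedByInserting A p T' T₁)
    (hn : ∀ v, {p, v} ∈ T.faces ↔ {p, v} ∈ T₁.faces) : T.faces ⊆ T₁.faces := by
  intro s hs
  by_cases hps : p ∈ s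
  · exact C.star_subset hT hT₁ hn hs hps
  have hne := SimplicialComplex.nonempty_of_mem_faces hs
  have hpos : (0 : ℝ) < s.card := by exact_mod_cast Finset.card_pos.2 hne
  set z := ∑ i ∈ s, ((s.card : ℝ)⁻¹) • i with hz
  have hsum : ∑ i ∈ s, ((s.card : ℝ)⁻¹) = 1 := by simp [hpos.ne']
  have hzs : z ∈ convexHull ℝ (s : Set Plane) :=
    Finset.mem_convexHull'.2 ⟨fun _ => (s.card : ℝ)⁻¹, fun _ _ => by positivity, hsum, rfl⟩
  have hzT : z ∈ T₁.space := by
    rw [hT₁.1.2.1, ← hT.1.2.1]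
    exact SimplicialComplex.convexHull_subset_space hs hzs
  obtain ⟨r, hr, hzr⟩ := SimplicialComplex.mem_space_iff.1 hzT
  have hsr : s ⊆ r := by
    by_cases hpr : p ∈ r
    · exact face_subset_of_relint hs (C.star_subset hT₁ hT (fun v => (hn v).symm) hr hpr)
        (fun _ => (s.card : ℝ)⁻¹) (fun _ _ => by positivity) hsum hzr
    · exact face_subset_of_relint (C.face_mem hT hs hps) (C.face_mem hT₁ hr hpr)
        (fun _ => (s.card : ℝ)⁻¹) (fun _ _ => by positivity) hsum hzr
  exact T₁.down_closed hr hsr hne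

theorem eq_of_nbrs (C : Ctx A p T') {T₁ : SimplicialComplex ℝ Plane}
    (hT : ObtainedByInserting A p T' T) (hT₁ : ObtainedByInserting A p T' T₁)
    (hn : ∀ v, {p, v} ∈ T.faces ↔ {p, v} ∈ T₁.faces) : T = T₁ :=
  SimplicialComplex.ext ((C.faces_subset hT hT₁ hn).antisymm
    (C.faces_subset hT₁ hT fun v => (hn v).symm))

end Ctx

/-! ### Counting -/

/-- The threefold convolution of the Catalan numbers. -/
theorem catalan_triple (n : ℕ) :
    ∑ x ∈ Finset.HasAntidiagonal.antidiagonal n, catalan x.1 *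
      ∑ y ∈ Finset.HasAntidiagonal.antidiagonal x.2, catalan y.1 * catalan y.2
    = catalan (n + 2) - catalan (n + 1) := by
  have h : catalan (n + 2) = catalan (n + 1) +
      ∑ x ∈ Finset.HasAntidiagonal.antidiagonal n, catalan x.1 *
        ∑ y ∈ Finset.HasAntidiagonal.antidiagonal x.2, catalan y.1 * catalan y.2 := by
    rw [catalan_succ', Finset.Nat.sum_antidiagonal_succ']
    simp only [catalan_zero, mul_one, catalan_succ']
  omega

/-- The points other than `p` joined to `p` by an edge of `T`. -/
noncomputable def nbrs (A : Finset Plane) (p : Plane) (T : SimplicialComplex ℝ Plane) :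
    Finset Plane := A.filter fun v => v ≠ p ∧ {p, v} ∈ T.faces

/-- The neighbours of `p` in `T` inside the open cone at `p` spanned by `a` and `b`. -/
noncomputable def coneNbrs (A : Finset Plane) (p : Plane) (T : SimplicialComplex ℝ Plane)
    (a b : Plane) : Finset Plane := A.filter fun v => {p, v} ∈ T.faces ∧ InCone p a b v

/-- All `k`-element sets arising as `coneNbrs` from insertions of `p` into `T'` for which `a` and
`b` are neighbours of `p`. -/
noncomputable def coneSets (A : Finset Plane) (p : Plane) (T' : SimplicialComplex ℝ Plane)
    (a b : Plane) (k : ℕ) : Finset (Finset Plane) :=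
  A.powerset.filter fun W => W.card = k ∧ ∃ T, ObtainedByInserting A p T' T ∧
    {p, a} ∈ T.faces ∧ {p, b} ∈ T.faces ∧ W = coneNbrs A p T a b

/-- All `i`-element sets arising as the neighbourhood of `p` in an insertion of `p` into `T'`. -/
noncomputable def nbrSets (A : Finset Plane) (p : Plane) (T' : SimplicialComplex ℝ Plane)
    (i : ℕ) : Finset (Finset Plane) :=
  A.powerset.filter fun V => V.card = i ∧ ∃ T, ObtainedByInserting A p T' T ∧ V = nbrs A p T

theorem mem_coneNbrs {A : Finset Plane} {p : Plane} {T : SimplicialComplex ℝ Plane}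
    {a b v : Plane} : v ∈ coneNbrs A p T a b ↔ v ∈ A ∧ {p, v} ∈ T.faces ∧ InCone p a b v := by
  simp [coneNbrs]

theorem mem_nbrs {A : Finset Plane} {p : Plane} {T : SimplicialComplex ℝ Plane}
    {v : Plane} : v ∈ nbrs A p T ↔ v ∈ A ∧ v ≠ p ∧ {p, v} ∈ T.faces := by
  simp [nbrs]

theorem coneNbrs_mem_coneSets {A : Finset Plane} {p : Plane} {T' T : SimplicialComplex ℝ Plane}
    {a b : Plane} (hT : ObtainedByInserting A p T' T) (ha : {p, a} ∈ T.faces)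
    (hb : {p, b} ∈ T.faces) :
    coneNbrs A p T a b ∈ coneSets A p T' a b (coneNbrs A p T a b).card := by
  unfold coneSets
  rw [Finset.mem_filter, Finset.mem_powerset]
  exact ⟨Finset.filter_subset _ _, rfl, T, hT, ha, hb, rfl⟩

theorem degree_eq_card_nbrs {A : Finset Plane} {p : Plane} {T : SimplicialComplex ℝ Plane}
    (hT : IsTriangulation A T) : degree T p = (nbrs A p T).card := by
  have : {s : Finset Plane | s ∈ T.faces ∧ s.card = 2 ∧ p ∈ s}
      = (((nbrs A p T).image fun v => ({p, v} : Finset Plane) : Finset (Finset Plane)) :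
        Set (Finset Plane)) := by
    ext s
    simp only [Set.mem_ofPred_eq, Finset.coe_image, Set.mem_image, Finset.mem_coe, mem_nbrs]
    constructor
    · rintro ⟨hs, h2, hp⟩
      obtain ⟨v, hv⟩ := Finset.card_eq_one.1
        (show (s.erase p).card = 1 by rw [Finset.card_erase_of_mem hp]; omega)
      have hins := Finset.insert_erase hp
      have hvs : v ∈ s.erase p := by rw [hv]; simp
      rw [hv] at hins
      exact ⟨v, ⟨hT.face_subset hs (Finset.mem_of_mem_erase hvs), Finset.ne_of_mem_erase hvs,
        by rw [hins]; exact hs⟩, hins⟩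
    · rintro ⟨v, ⟨-, hvp, hf⟩, rfl⟩
      exact ⟨hf, Finset.card_pair hvp.symm, by simp⟩
  rw [degree, this, Nat.card_coe_set_eq, Set.ncard_coe_finset, Finset.card_image_of_injOn]
  intro u hu v hv huv
  have hu' := (mem_nbrs.1 hu).2.1
  have : u ∈ ({p, v} : Finset Plane) := by
    have huv' : ({p, u} : Finset Plane) = {p, v} := huv
    rw [← huv']; simp
  simpa [hu'] using this

namespace Ctx

variable {A : Finset Plane} {p : Plane} {T' T : SimplicialComplex ℝ Plane}

/-- The link of `p` over an edge of `T'` unfolds as a binary tree: if it has a vertex beyond `ab`,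
it contains the apex `c` of the triangle of `T'` there, and splits into the parts over `ac` and
`cb`. The apex depends on `T'` only, so the Catalan recursion bounds the count. -/
theorem card_coneSets_le (C : Ctx A p T') (k : ℕ) : ∀ a b, 0 < orient p a b → {a, b} ∈ T'.faces →
    EmptyBelow A p a b → (coneSets A p T' a b k).card ≤ catalan k := by
  induction k using Nat.strong_induction_on with
  | _ k ih =>
    intro a b hD hab E
    rcases k with _ | k
    · have : coneSets A p T' a b 0 ⊆ {∅} := by
        intro W hW
        simpa using (Finset.mem_filter.1 hW).2.1
      simpa using Finset.card_le_card this
    rcases (coneSets A p T' a b (k + 1)).eq_empty_or_nonempty with h0 | ⟨W₀, hW₀⟩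
    · simp [h0]
    have step : ∀ W ∈ coneSets A p T' a b (k + 1), ∃ T, ObtainedByInserting A p T' T ∧
        {p, a} ∈ T.faces ∧ {p, b} ∈ T.faces ∧ W = coneNbrs A p T a b ∧ W.card = k + 1 ∧
        ∃ c, {a, c, b} ∈ T'.faces ∧ 0 < orient a c b ∧ InCone p a b c ∧ {p, c} ∈ T.faces := by
      intro W hW
      obtain ⟨-, hcard, T, hT, ha, hb, hWT⟩ := Finset.mem_filter.1 hW
      obtain ⟨v, hv⟩ := Finset.card_pos.1 (show 0 < W.card by omega)
      rw [hWT, mem_coneNbrs] at hv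
      exact ⟨T, hT, ha, hb, hWT, hcard, C.descend hT hD hab E ha hb hv.2.1 hv.2.2⟩
    obtain ⟨T₀, -, -, -, -, -, c, hf, hacb, hc, -⟩ := step W₀ hW₀
    have hsub : coneSets A p T' a b (k + 1) ⊆ (Finset.HasAntidiagonal.antidiagonal k).biUnion fun x =>
        (coneSets A p T' a c x.1 ×ˢ coneSets A p T' c b x.2).image
          fun y => insert c (y.1 ∪ y.2) := by
      intro W hW
      obtain ⟨T, hT, ha, hb, hWT, hcard, c', hf', hacb', hc', hpc⟩ := step W hW
      obtain rfl := apex_unique hf hf' hacb hacb'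
      have hcA := C.mem_erase hf' (a := c') (by simp)
      have heq : W = insert c' (coneNbrs A p T a c' ∪ coneNbrs A p T c' b) := by
        rw [hWT]
        ext v
        simp only [Finset.mem_insert, Finset.mem_union, mem_coneNbrs]
        constructor
        · rintro ⟨hvA, hpv, hv⟩
          by_cases hvc : v = c'
          · exact Or.inl hvc
          rcases lt_or_gt_of_ne (C.gp.orient_ne C.hp hvA hcA.1 hv.ne_apex.symm hvc hcA.2.symm)
            with h | h
          · exact Or.inr (Or.inr ⟨hvA, hpv, by rw [orient_swap]; linarith, hv.2⟩)
          · exact Or.inr (Or.inl ⟨hvA, hpv, hv.1, h⟩)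
        · rintro (rfl | ⟨hvA, hpv, hv⟩ | ⟨hvA, hpv, hv⟩)
          · exact ⟨hcA.1, hpc, hc'⟩
          · exact ⟨hvA, hpv, hc'.mono_left hD hv⟩
          · exact ⟨hvA, hpv, hc'.mono_right hD hv⟩
      have hdisj : Disjoint (coneNbrs A p T a c') (coneNbrs A p T c' b) := by
        rw [Finset.disjoint_left]
        intro v h1 h2
        have h3 := (mem_coneNbrs.1 h1).2.2.2
        have h4 := (mem_coneNbrs.1 h2).2.2.1
        rw [orient_swap] at h4
        linarith
      have hnot : c' ∉ coneNbrs A p T a c' ∪ coneNbrs A p T c' b := by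
        simp [mem_coneNbrs, InCone]
      rw [Finset.mem_biUnion]
      refine ⟨((coneNbrs A p T a c').card, (coneNbrs A p T c' b).card), ?_, ?_⟩
      · rw [Finset.HasAntidiagonal.mem_antidiagonal]
        have := congrArg Finset.card heq
        rw [Finset.card_insert_of_notMem hnot, Finset.card_union_of_disjoint hdisj, hcard] at this
        dsimp; omega
      · rw [Finset.mem_image]
        exact ⟨(coneNbrs A p T a c', coneNbrs A p T c' b), Finset.mem_product.2
          ⟨coneNbrs_mem_coneSets hT ha hpc, coneNbrs_mem_coneSets hT hpc hb⟩, heq.symm⟩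
    refine (Finset.card_le_card hsub).trans (Finset.card_biUnion_le.trans ?_)
    rw [catalan_succ']
    refine Finset.sum_le_sum fun x hx => Finset.card_image_le.trans ?_
    rw [Finset.card_product]
    rw [Finset.HasAntidiagonal.mem_antidiagonal] at hx
    exact Nat.mul_le_mul
      (ih x.1 (by omega) a c hc.1 (face_pair hf (by simp) (by simp))
        (C.emptyBelow_left E hf hD hacb hc))
      (ih x.2 (by omega) c b hc.2 (face_pair hf (by simp) (by simp))
        (C.emptyBelow_right E hf hD hacb hc))

/-- The point `p` is strictly inside a triangle of `T'`, by general position. -/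
theorem exists_root (C : Ctx A p T') : ∃ a b c, {a, b, c} ∈ T'.faces ∧ 0 < orient a b p ∧
    0 < orient b c p ∧ 0 < orient c a p := by
  have hps : p ∈ T'.space := by
    rw [C.tri.2.1, C.hull]; exact subset_convexHull ℝ _ C.hp
  obtain ⟨s₀, hs₀, hp₀⟩ := SimplicialComplex.mem_space_iff.1 hps
  obtain ⟨s, hs, w, hw0, hw1, hw⟩ := exists_relint hs₀ hp₀
  have hcard := C.tri.1 s hs
  have hpos : 0 < s.card := Finset.card_pos.2 (SimplicialComplex.nonempty_of_mem_faces hs)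
  have hor : ∀ a b, orient a b p = ∑ i ∈ s, w i * orient a b i := by
    intro a b; rw [← hw, orient_sum _ _ _ _ _ hw1]
  rcases Nat.lt_or_ge s.card 2 with h1 | h1
  · obtain ⟨a, rfl⟩ := Finset.card_eq_one.1 (show s.card = 1 by omega)
    simp only [Finset.sum_singleton] at hw1 hw
    rw [hw1, one_smul] at hw
    exact absurd hw (C.mem_erase hs (by simp)).2
  rcases Nat.lt_or_ge s.card 3 with h2 | h2
  · obtain ⟨a, b, hab, rfl⟩ := Finset.card_eq_two.1 (show s.card = 2 by omega)
    have ha := C.mem_erase hs (a := a) (by simp)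
    have hb := C.mem_erase hs (a := b) (by simp)
    refine absurd ?_ (C.gp.orient_ne ha.1 hb.1 C.hp hab hb.2 ha.2)
    rw [hor, Finset.sum_pair hab]; simp
  obtain ⟨a, b, c, hab, hac, hbc, rfl⟩ := Finset.card_eq_three.1 (show s.card = 3 by omega)
  have e : ∀ f : Plane → ℝ, ∑ i ∈ ({a, b, c} : Finset Plane), f i = f a + f b + f c := by
    intro f
    rw [Finset.sum_insert (by simp [hab, hac]), Finset.sum_pair hbc]; ring
  have ha := C.mem_erase hs (a := a) (by simp)
  have hb := C.mem_erase hs (a := b) (by simp)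
  have hc := C.mem_erase hs (a := c) (by simp)
  have wa := hw0 a (by simp)
  have wb := hw0 b (by simp)
  have wc := hw0 c (by simp)
  rcases lt_or_gt_of_ne (C.gp.orient_ne ha.1 hb.1 hc.1 hab hbc hac) with h | h
  · have h' : 0 < orient a c b := by rw [orient_swap]; linarith
    refine ⟨a, c, b, by rwa [tri_swap], ?_, ?_, ?_⟩
    · rw [hor, e]; simpa using mul_pos wb h'
    · rw [hor, e, ← orient_rot]; simpa using mul_pos wa h'
    · rw [hor, e, orient_rot b a c]; simpa using mul_pos wc h'
  · refine ⟨a, b, c, hs, ?_, ?_, ?_⟩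
    · rw [hor, e]; simpa using mul_pos wc h
    · rw [hor, e, ← orient_rot]; simpa using mul_pos wa h
    · rw [hor, e, orient_rot c a b]; simpa using mul_pos wb h

/-- The corners of the triangle `abc` of `T'` around `p` are neighbours of `p`, and the remaining
ones are distributed over the three cones spanned by its edges. -/
theorem card_nbrSets_le (C : Ctx A p T') (n : ℕ) :
    (nbrSets A p T' (n + 3)).card ≤ catalan (n + 2) - catalan (n + 1) := by
  obtain ⟨a, b, c, hf, h1, h2, h3⟩ := C.exists_root
  have hD : 0 < orient a b c := by rw [← orient_sum3 a b c p]; positivity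
  obtain ⟨hab, hac, hbc⟩ := ne_of_orient_pos hD
  have haA := C.mem_erase hf (a := a) (by simp)
  have hbA := C.mem_erase hf (a := b) (by simp)
  have hcA := C.mem_erase hf (a := c) (by simp)
  have hf2 : {b, c, a} ∈ T'.faces := by rwa [← tri_rot]
  have hf3 : {c, a, b} ∈ T'.faces := by rwa [← tri_rot, ← tri_rot]
  have p1 : 0 < orient p a b := by rw [orient_rot]; exact h1
  have p2 : 0 < orient p b c := by rw [orient_rot]; exact h2
  have p3 : 0 < orient p c a := by rw [orient_rot]; exact h3
  have hsub : nbrSets A p T' (n + 3) ⊆ (Finset.HasAntidiagonal.antidiagonal n).biUnion fun x =>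
      (Finset.HasAntidiagonal.antidiagonal x.2).biUnion fun y =>
      (coneSets A p T' a b x.1 ×ˢ (coneSets A p T' b c y.1 ×ˢ coneSets A p T' c a y.2)).image
        fun z => {a, b, c} ∪ (z.1 ∪ (z.2.1 ∪ z.2.2)) := by
    intro V hV
    obtain ⟨-, hcard, T, hT, hVT⟩ := Finset.mem_filter.1 hV
    have pa := C.root_nbr hT hf h1 h2 h3
    have pb := C.root_nbr hT hf2 h2 h3 h1
    have pc := C.root_nbr hT hf3 h3 h1 h2
    have heq : V = {a, b, c} ∪
        (coneNbrs A p T a b ∪ (coneNbrs A p T b c ∪ coneNbrs A p T c a)) := by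
      rw [hVT]
      ext v
      simp only [Finset.mem_insert, Finset.mem_union, mem_coneNbrs, mem_nbrs,
        Finset.mem_singleton]
      constructor
      · rintro ⟨hvA, hvp, hv⟩
        by_cases hva : v = a
        · exact Or.inl (Or.inl hva)
        by_cases hvb : v = b
        · exact Or.inl (Or.inr (Or.inl hvb))
        by_cases hvc : v = c
        · exact Or.inl (Or.inr (Or.inr hvc))
        right
        have na := C.gp.orient_ne C.hp haA.1 hvA haA.2.symm (Ne.symm hva) hvp.symm
        have nb := C.gp.orient_ne C.hp hbA.1 hvA hbA.2.symm (Ne.symm hvb) hvp.symm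
        have nc := C.gp.orient_ne C.hp hcA.1 hvA hcA.2.symm (Ne.symm hvc) hvp.symm
        have id : orient p b c * orient p a v + orient p c a * orient p b v
            + orient p a b * orient p c v = 0 := by unfold orient; ring
        simp only [hvA, hv, true_and, InCone, orient_swap p v]
        -- `p` is a positive combination of the corners, so `v` cannot be on the same side of
        -- all three lines through `p`.
        rcases lt_or_gt_of_ne na with ha | ha <;> rcases lt_or_gt_of_ne nb with hb | hb <;>
          rcases lt_or_gt_of_ne nc with hc | hc
        · nlinarith
        · exact Or.inr (Or.inr ⟨hc, by linarith⟩)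
        · exact Or.inr (Or.inl ⟨hb, by linarith⟩)
        · exact Or.inr (Or.inr ⟨hc, by linarith⟩)
        · exact Or.inl ⟨ha, by linarith⟩
        · exact Or.inl ⟨ha, by linarith⟩
        · exact Or.inr (Or.inl ⟨hb, by linarith⟩)
        · nlinarith [mul_pos p1 hc, mul_pos p2 ha, mul_pos p3 hb]
      · rintro ((rfl | rfl | rfl) | ⟨hvA, hpv, hv⟩ | ⟨hvA, hpv, hv⟩ | ⟨hvA, hpv, hv⟩)
        · exact ⟨haA.1, haA.2, pa⟩
        · exact ⟨hbA.1, hbA.2, pb⟩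
        · exact ⟨hcA.1, hcA.2, pc⟩
        all_goals exact ⟨hvA, hv.ne_apex, hpv⟩
    have sw := orient_swap p
    have d1 : Disjoint (coneNbrs A p T b c) (coneNbrs A p T c a) := by
      rw [Finset.disjoint_left]
      intro v k1 k2
      have k3 := (mem_coneNbrs.1 k1).2.2.2
      have k4 := (mem_coneNbrs.1 k2).2.2.1
      linarith [sw v c]
    have d2 : Disjoint (coneNbrs A p T a b) (coneNbrs A p T b c ∪ coneNbrs A p T c a) := by
      rw [Finset.disjoint_left]
      intro v k1 k2
      have k3 := (mem_coneNbrs.1 k1).2.2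
      rcases Finset.mem_union.1 k2 with k2 | k2
      · have k4 := (mem_coneNbrs.1 k2).2.2.1
        linarith [sw v b, k3.2]
      · have k4 := (mem_coneNbrs.1 k2).2.2.2
        linarith [sw v a, k3.1]
    have d3 : Disjoint ({a, b, c} : Finset Plane)
        (coneNbrs A p T a b ∪ (coneNbrs A p T b c ∪ coneNbrs A p T c a)) := by
      rw [Finset.disjoint_left]
      intro v k1 k2
      simp only [Finset.mem_union, mem_coneNbrs, Finset.mem_insert, Finset.mem_singleton] at k1 k2
      rcases k1 with h | h | h <;> rw [h] at k2 <;> rcases k2 with k2 | k2 | k2 <;>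
        first
        | exact k2.2.2.ne_left rfl
        | exact k2.2.2.ne_right rfl
        | (have k3 := k2.2.2.1; have k4 := k2.2.2.2; linarith [sw a b, sw b c, sw c a])
    have hc3 : ({a, b, c} : Finset Plane).card = 3 :=
      Finset.card_eq_three.2 ⟨a, b, c, hab, hac, hbc, rfl⟩
    have hcard' := congrArg Finset.card heq
    rw [Finset.card_union_of_disjoint d3, Finset.card_union_of_disjoint d2,
      Finset.card_union_of_disjoint d1, hcard, hc3] at hcard'
    rw [Finset.mem_biUnion]
    refine ⟨((coneNbrs A p T a b).card, (coneNbrs A p T b c).card + (coneNbrs A p T c a).card),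
      by rw [Finset.HasAntidiagonal.mem_antidiagonal]; dsimp; omega, ?_⟩
    rw [Finset.mem_biUnion]
    refine ⟨((coneNbrs A p T b c).card, (coneNbrs A p T c a).card),
      by rw [Finset.HasAntidiagonal.mem_antidiagonal], ?_⟩
    rw [Finset.mem_image]
    exact ⟨(coneNbrs A p T a b, coneNbrs A p T b c, coneNbrs A p T c a), Finset.mem_product.2
      ⟨coneNbrs_mem_coneSets hT pa pb, Finset.mem_product.2
        ⟨coneNbrs_mem_coneSets hT pb pc, coneNbrs_mem_coneSets hT pc pa⟩⟩, heq.symm⟩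
  refine (Finset.card_le_card hsub).trans (Finset.card_biUnion_le.trans ?_)
  rw [← catalan_triple]
  refine Finset.sum_le_sum fun x _ => Finset.card_biUnion_le.trans ?_
  rw [Finset.mul_sum]
  refine Finset.sum_le_sum fun y _ => Finset.card_image_le.trans ?_
  rw [Finset.card_product, Finset.card_product]
  exact Nat.mul_le_mul
    (C.card_coneSets_le _ a b p1 (face_pair hf (by simp) (by simp)) (C.root_emptyBelow hf h1 h2 h3))
    (Nat.mul_le_mul
      (C.card_coneSets_le _ b c p2 (face_pair hf (by simp) (by simp))
        (C.root_emptyBelow hf2 h2 h3 h1))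
      (C.card_coneSets_le _ c a p3 (face_pair hf (by simp) (by simp))
        (C.root_emptyBelow hf3 h3 h1 h2)))

/-- An insertion is determined by the neighbourhood of `p`. -/
theorem exists_injective (C : Ctx A p T') (i : ℕ) :
    ∃ f : {T : SimplicialComplex ℝ Plane | ObtainedByInserting A p T' T ∧ degree T p = i} →
      nbrSets A p T' i, Function.Injective f := by
  refine ⟨fun T => ⟨nbrs A p T.1, ?_⟩, ?_⟩
  · unfold nbrSets
    rw [Finset.mem_filter, Finset.mem_powerset]
    exact ⟨Finset.filter_subset _ _, by rw [← degree_eq_card_nbrs T.2.1.1, T.2.2], T.1, T.2.1, rfl⟩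
  · rintro ⟨T, hT, hd⟩ ⟨T₁, hT₁, hd₁⟩ h
    have h' : nbrs A p T = nbrs A p T₁ := congrArg Subtype.val h
    refine Subtype.ext (C.eq_of_nbrs hT hT₁ fun v => ?_)
    have hpv : ∀ {S : SimplicialComplex ℝ Plane}, IsTriangulation A S → {p, p} ∈ S.faces := by
      intro S hS
      have : p ∈ S.vertices := by rw [hS.2.2]; exact C.hp
      simpa [SimplicialComplex.mem_vertices] using this
    by_cases hvp : v = p
    · subst hvp
      exact iff_of_true (hpv hT.1) (hpv hT₁.1)
    constructor
    · intro hf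
      exact (mem_nbrs.1 (h' ▸ mem_nbrs.2 ⟨hT.1.face_subset hf (by simp), hvp, hf⟩)).2.2
    · intro hf
      exact (mem_nbrs.1 (h'.symm ▸ mem_nbrs.2 ⟨hT₁.1.face_subset hf (by simp), hvp, hf⟩)).2.2

end Ctx

/-! ### The stellar subdivision -/

theorem mem_hull_iff {t D : Finset Plane} (ht : t ⊆ D) {x : Plane} :
    x ∈ convexHull ℝ (t : Set Plane) ↔ ∃ w : Plane → ℝ, (∀ i ∈ D, 0 ≤ w i) ∧
      (∀ i ∈ D, i ∉ t → w i = 0) ∧ ∑ i ∈ D, w i = 1 ∧ ∑ i ∈ D, w i • i = x := by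
  rw [Finset.mem_convexHull']
  constructor
  · rintro ⟨w, h0, h1, h2⟩
    refine ⟨fun i => if i ∈ t then w i else 0, fun i _ => ?_, fun i _ hi => by simp [hi], ?_, ?_⟩
    · by_cases h : i ∈ t
      · simpa [h] using h0 i h
      · simp [h]
    · rw [← h1, ← Finset.sum_subset ht fun i _ hi => by simp [hi]]
      exact Finset.sum_congr rfl fun i hi => by simp [hi]
    · rw [← h2, ← Finset.sum_subset ht fun i _ hi => by simp [hi]]
      exact Finset.sum_congr rfl fun i hi => by simp [hi]
  · rintro ⟨w, h0, hz, h1, h2⟩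
    exact ⟨w, fun i hi => h0 i (ht hi), by rw [← h1]; exact Finset.sum_subset ht hz,
      by rw [← h2]; exact Finset.sum_subset ht fun i hi h => by rw [hz i hi h, zero_smul]⟩

/-- Points of the cone with apex `p` over a face `t` of `D`, in terms of the weight `l` of `p` and
weights on `D` supported on `t`. -/
theorem mem_hull_insert_iff {t D : Finset Plane} {p : Plane} (ht : t ⊆ D) (hp : p ∉ D)
    {x : Plane} :
    x ∈ convexHull ℝ ((insert p t : Finset Plane) : Set Plane) ↔ ∃ (l : ℝ) (w : Plane → ℝ),
      0 ≤ l ∧ (∀ i ∈ D, 0 ≤ w i) ∧ (∀ i ∈ D, i ∉ t → w i = 0) ∧ l + ∑ i ∈ D, w i = 1 ∧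
      l • p + ∑ i ∈ D, w i • i = x := by
  have hne : ∀ i ∈ D, i ≠ p := by rintro i hi rfl; exact hp hi
  rw [mem_hull_iff (Finset.insert_subset_insert p ht)]
  constructor
  · rintro ⟨w, h0, hz, h1, h2⟩
    rw [Finset.sum_insert hp] at h1 h2
    exact ⟨w p, w, h0 p (by simp), fun i hi => h0 i (by simp [hi]),
      fun i hi hit => hz i (by simp [hi]) (by simp [hit, hne i hi]), h1, h2⟩
  · rintro ⟨l, w, hl, h0, hz, h1, h2⟩
    refine ⟨fun i => if i = p then l else w i, ?_, ?_, ?_, ?_⟩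
    · intro i hi
      by_cases h : i = p
      · simpa [h] using hl
      · simpa [h] using h0 i (by simpa [h] using hi)
    · intro i hi hit
      simp only [Finset.mem_insert, not_or] at hi hit
      simpa [hit.1] using hz i (by simpa [hit.1] using hi) hit.2
    · rw [Finset.sum_insert hp, ← h1]
      simp only [if_true]
      exact congrArg _ (Finset.sum_congr rfl fun i hi => by simp [hne i hi])
    · rw [Finset.sum_insert hp, ← h2]
      simp only [if_true]
      exact congrArg _ (Finset.sum_congr rfl fun i hi => by simp [hne i hi])

theorem coords_unique {D : Finset Plane} (hD : AffineIndependent ℝ ((↑) : D → Plane))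
    {f g : Plane → ℝ} (h1 : ∑ i ∈ D, f i = ∑ i ∈ D, g i)
    (h2 : ∑ i ∈ D, f i • i = ∑ i ∈ D, g i • i) : ∀ i ∈ D, f i = g i :=
  hD.eq_of_sum_eq_sum_subtype h1 h2

/-- A point `p` with positive barycentric coordinates `π` in the simplex `D`. -/
structure InSimplex (p : Plane) (D : Finset Plane) (π : Plane → ℝ) : Prop where
  indep : AffineIndependent ℝ ((↑) : D → Plane)
  pos : ∀ i ∈ D, 0 < π i
  sum : ∑ i ∈ D, π i = 1
  eq : ∑ i ∈ D, π i • i = p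
  notMem : p ∉ D

namespace InSimplex

variable {p x : Plane} {D s t : Finset Plane} {π : Plane → ℝ}

theorem coords (I : InSimplex p D π) {l m : ℝ} {v w : Plane → ℝ}
    (hv : l + ∑ i ∈ D, v i = 1) (hvx : l • p + ∑ i ∈ D, v i • i = x)
    (hw : m + ∑ i ∈ D, w i = 1) (hwx : m • p + ∑ i ∈ D, w i • i = x) :
    ∀ i ∈ D, l * π i + v i = m * π i + w i := by
  refine coords_unique (f := fun i => l * π i + v i) (g := fun i => m * π i + w i) I.indep ?_ ?_
  · rw [Finset.sum_add_distrib, Finset.sum_add_distrib, ← Finset.mul_sum, ← Finset.mul_sum, I.sum,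
      mul_one, mul_one, hv, hw]
  · simp only [add_smul, mul_smul]
    rw [Finset.sum_add_distrib, Finset.sum_add_distrib, ← Finset.smul_sum, ← Finset.smul_sum, I.eq,
      hvx, hwx]

theorem mem_hull (I : InSimplex p D π) : p ∈ convexHull ℝ (D : Set Plane) :=
  Finset.mem_convexHull'.2 ⟨π, fun i hi => (I.pos i hi).le, I.sum, I.eq⟩

theorem hull_insert_subset (I : InSimplex p D π) (ht : t ⊆ D) :
    convexHull ℝ ((insert p t : Finset Plane) : Set Plane) ⊆ convexHull ℝ (D : Set Plane) := by
  refine convexHull_min ?_ (convex_convexHull ℝ _)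
  intro y hy
  rcases Finset.mem_insert.1 (Finset.mem_coe.1 hy) with rfl | hy
  · exact I.mem_hull
  · exact subset_convexHull ℝ _ (ht hy)

/-- Two cones with apex `p` over proper faces of `D` meet in the cone over the common face. -/
theorem inter_cones (I : InSimplex p D π) (hs : s ⊂ D) (ht : t ⊂ D)
    (h1 : x ∈ convexHull ℝ ((insert p s : Finset Plane) : Set Plane))
    (h2 : x ∈ convexHull ℝ ((insert p t : Finset Plane) : Set Plane)) :
    x ∈ convexHull ℝ ((insert p (s ∩ t) : Finset Plane) : Set Plane) := by
  obtain ⟨l, v, hl, v0, vz, v1, vx⟩ := (mem_hull_insert_iff hs.1 I.notMem).1 h1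
  obtain ⟨m, w, hm, w0, wz, w1, wx⟩ := (mem_hull_insert_iff ht.1 I.notMem).1 h2
  have key := I.coords v1 vx w1 wx
  obtain ⟨i, hi, his⟩ := Finset.exists_of_ssubset hs
  obtain ⟨j, hj, hjt⟩ := Finset.exists_of_ssubset ht
  -- A vertex missing from `s` shows `m ≤ l`, a vertex missing from `t` shows `l ≤ m`.
  have e1 : m ≤ l := by
    have := key i hi
    rw [vz i hi his] at this
    exact le_of_mul_le_mul_right (by linarith [w0 i hi]) (I.pos i hi)
  have e2 : l ≤ m := by
    have := key j hj
    rw [wz j hj hjt] at this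
    exact le_of_mul_le_mul_right (by linarith [v0 j hj]) (I.pos j hj)
  obtain rfl := le_antisymm e2 e1
  refine (mem_hull_insert_iff (Finset.inter_subset_left.trans hs.1) I.notMem).2
    ⟨l, v, hl, v0, fun k hk hkn => ?_, v1, vx⟩
  by_cases hks : k ∈ s
  · have hkt : k ∉ t := fun h => hkn (Finset.mem_inter.2 ⟨hks, h⟩)
    have := key k hk
    rw [wz k hk hkt] at this
    linarith
  · exact vz k hk hks

/-- A cone with apex `p` over a proper face meets another proper face of `D` in their common
face. -/
theorem inter_cone_face (I : InSimplex p D π) (hs : s ⊂ D) (ht : t ⊆ D)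
    (h1 : x ∈ convexHull ℝ (s : Set Plane))
    (h2 : x ∈ convexHull ℝ ((insert p t : Finset Plane) : Set Plane)) :
    x ∈ convexHull ℝ ((s ∩ t : Finset Plane) : Set Plane) := by
  obtain ⟨v, v0, vz, v1, vx⟩ := (mem_hull_iff hs.1).1 h1
  obtain ⟨m, w, hm, w0, wz, w1, wx⟩ := (mem_hull_insert_iff ht I.notMem).1 h2
  have key := I.coords (l := 0) (by rw [zero_add]; exact v1) (by rw [zero_smul, zero_add]; exact vx)
    w1 wx
  obtain ⟨i, hi, his⟩ := Finset.exists_of_ssubset hs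
  have e1 : m = 0 := by
    have := key i hi
    rw [vz i hi his] at this
    refine le_antisymm ?_ hm
    exact le_of_mul_le_mul_right (by linarith [w0 i hi]) (I.pos i hi)
  subst e1
  refine (mem_hull_iff (Finset.inter_subset_left.trans hs.1)).2 ⟨v, v0, fun k hk hkn => ?_, v1, vx⟩
  by_cases hks : k ∈ s
  · have hkt : k ∉ t := fun h => hkn (Finset.mem_inter.2 ⟨hks, h⟩)
    have := key k hk
    rw [wz k hk hkt] at this
    linarith
  · exact vz k hk hks

/-- The cones with apex `p` over the facets of `D` cover `D`. -/
theorem exists_cone (I : InSimplex p D π) (hx : x ∈ convexHull ℝ (D : Set Plane)) :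
    ∃ j ∈ D, x ∈ convexHull ℝ ((insert p (D.erase j) : Finset Plane) : Set Plane) := by
  obtain ⟨v, v0, -, v1, vx⟩ := (mem_hull_iff (Finset.Subset.refl D)).1 hx
  have hne : D.Nonempty := by
    rw [Finset.nonempty_iff_ne_empty]; rintro rfl; simp at v1
  obtain ⟨j, hj, hmin⟩ := Finset.exists_min_image D (fun i => v i / π i) hne
  refine ⟨j, hj, (mem_hull_insert_iff (Finset.erase_subset j D) I.notMem).2
    ⟨v j / π j, fun i => v i - v j / π j * π i, div_nonneg (v0 j hj) (I.pos j hj).le, ?_, ?_, ?_, ?_⟩⟩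
  · intro i hi
    have := (le_div_iff₀ (I.pos i hi)).1 (hmin i hi)
    linarith
  · intro i hi hie
    have hij : i = j := by
      by_contra h; exact hie (Finset.mem_erase.2 ⟨h, hi⟩)
    subst hij
    exact sub_eq_zero.2 (div_mul_cancel₀ _ (I.pos i hi).ne').symm
  · rw [Finset.sum_sub_distrib, ← Finset.mul_sum, I.sum, v1]; ring
  · simp only [sub_smul, mul_smul]
    rw [Finset.sum_sub_distrib, ← Finset.smul_sum, I.eq, vx]; abel

end InSimplex

namespace Ctx

variable {A : Finset Plane} {p : Plane} {T' T : SimplicialComplex ℝ Plane}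

/-- Coning the boundary of the triangle of `T'` around `p` gives an insertion of degree `3`. -/
theorem exists_degree_three (C : Ctx A p T') :
    ∃ T, ObtainedByInserting A p T' T ∧ degree T p = 3 := by
  obtain ⟨a, b, c, hf, h1, h2, h3⟩ := C.exists_root
  have hD : 0 < orient a b c := by rw [← orient_sum3 a b c p]; positivity
  obtain ⟨hab, hac, hbc⟩ := ne_of_orient_pos hD
  obtain ⟨D, hDdef⟩ : ∃ D : Finset Plane, D = {a, b, c} := ⟨_, rfl⟩
  rw [← hDdef] at hf
  have hc3 : D.card = 3 := Finset.card_eq_three.2 ⟨a, b, c, hab, hac, hbc, hDdef⟩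
  have hpD : p ∉ D := fun h => (C.mem_erase hf h).2 rfl
  obtain ⟨π, I⟩ : ∃ π, InSimplex p D π := by
    have hps := mem_hull_tri (s := (D : Set Plane)) hD h1.le h2.le h3.le
      (by simp [hDdef]) (by simp [hDdef]) (by simp [hDdef])
    obtain ⟨r, hr, w, w0, w1, hw⟩ := exists_relint hf hps
    have hrD : r = D := by
      have hsub : D ⊆ r := by
        obtain ⟨ha, hb, hc⟩ := triangle_subset_of_mem (K := T') (hDdef ▸ hf) hr h1 h2 h3
          (Finset.mem_convexHull'.2 ⟨w, fun i hi => (w0 i hi).le, w1, hw⟩)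
        rw [hDdef]
        intro i
        simp only [Finset.mem_insert, Finset.mem_singleton]
        rintro (rfl | rfl | rfl) <;> assumption
      exact (Finset.eq_of_subset_of_card_le hsub (by rw [hc3]; exact C.tri.1 r hr)).symm
    subst hrD
    exact ⟨w, T'.indep hf, w0, w1, hw, hpD⟩
  have hmax : ∀ s ∈ T'.faces, D ⊆ s → s = D := fun s hs h =>
    (Finset.eq_of_subset_of_card_le h (by rw [hc3]; exact C.tri.1 s hs)).symm
  have hDA : D ⊆ A := fun i hi => (C.mem_erase hf hi).1
  have hpT' : ∀ s ∈ T'.faces, p ∉ s := fun s hs h => (C.mem_erase hs h).2 rfl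
  obtain ⟨F, hF⟩ : ∃ F : Set (Finset Plane),
      ∀ s, s ∈ F ↔ (s ∈ T'.faces ∧ s ≠ D) ∨ ∃ t, t ⊂ D ∧ s = insert p t :=
    ⟨{s | (s ∈ T'.faces ∧ s ≠ D) ∨ ∃ t, t ⊂ D ∧ s = insert p t}, fun s => Iff.rfl⟩
  have hFc : ∀ s ∈ F, s.card ≤ 3 := by
    intro s hs
    rcases (hF s).1 hs with ⟨hs, -⟩ | ⟨t, ht, rfl⟩
    · exact C.tri.1 s hs
    · have := Finset.card_lt_card ht
      have := Finset.card_insert_le p t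
      omega
  have hFA : ∀ s ∈ F, s ⊆ A := by
    intro s hs
    rcases (hF s).1 hs with ⟨hs, -⟩ | ⟨t, ht, rfl⟩
    · exact fun i hi => (C.mem_erase hs hi).1
    · exact Finset.insert_subset C.hp (ht.1.trans hDA)
  have mixed : ∀ s ∈ T'.faces, s ≠ D → ∀ t, t ⊂ D → ∀ x, x ∈ convexHull ℝ (s : Set Plane) →
      x ∈ convexHull ℝ ((insert p t : Finset Plane) : Set Plane) →
      x ∈ convexHull ℝ ((s ∩ insert p t : Finset Plane) : Set Plane) := by
    intro s hs hsD t ht x hx1 hx2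
    have hx3 := T'.inter_subset_convexHull hs hf ⟨hx1, I.hull_insert_subset ht.1 hx2⟩
    rw [← Finset.coe_inter] at hx3
    have hss : s ∩ D ⊂ D := by
      refine ⟨Finset.inter_subset_right, fun h => hsD (hmax s hs ?_)⟩
      exact h.trans Finset.inter_subset_left
    refine convexHull_mono ?_ (I.inter_cone_face hss ht.1 hx3 hx2)
    intro i
    simp only [Finset.coe_inter, Finset.coe_insert, Set.mem_inter_iff, Set.mem_insert_iff,
      Finset.mem_coe]
    tauto
  let T : SimplicialComplex ℝ Plane :=
    { faces := F
      isRelLowerSet_faces := by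
        intro s hs
        refine ⟨?_, fun u hus hu => ?_⟩
        · rcases (hF s).1 hs with ⟨hs, -⟩ | ⟨t, ht, rfl⟩
          · exact SimplicialComplex.nonempty_of_mem_faces hs
          · exact Finset.insert_nonempty p t
        · have hus : u ⊆ s := hus
          rw [hF]
          rcases (hF s).1 hs with ⟨hs, hsD⟩ | ⟨t, ht, rfl⟩
          · refine Or.inl ⟨T'.down_closed hs hus hu, ?_⟩
            rintro rfl
            exact hsD (hmax s hs hus)
          · by_cases hpu : p ∈ u
            · refine Or.inr ⟨u.erase p, ?_, (Finset.insert_erase hpu).symm⟩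
              exact lt_of_le_of_lt (Finset.subset_insert_iff.1 hus) ht
            · have hut : u ⊆ t := (Finset.subset_insert_iff_of_notMem hpu).1 hus
              refine Or.inl ⟨T'.down_closed hf (hut.trans ht.1) hu, ?_⟩
              rintro rfl
              exact ht.2 hut
      indep := fun {s} hs => C.gp.affineIndependent (hFA s hs) (hFc s hs)
      inter_subset_convexHull := by
        rintro s t hs ht x ⟨hxs, hxt⟩
        rw [← Finset.coe_inter]
        rcases (hF s).1 hs with ⟨hs', hsD⟩ | ⟨s, hs', rfl⟩ <;>
          rcases (hF t).1 ht with ⟨ht', htD⟩ | ⟨t, ht', rfl⟩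
        · rw [Finset.coe_inter]
          exact T'.inter_subset_convexHull hs' ht' ⟨hxs, hxt⟩
        · exact mixed s hs' hsD t ht' x hxs hxt
        · rw [Finset.inter_comm]
          exact mixed t ht' htD s hs' x hxt hxs
        · rw [← Finset.insert_inter_distrib]
          exact I.inter_cones hs' ht' hxs hxt }
  have hT : IsTriangulation A T := by
    refine ⟨hFc, ?_, ?_⟩
    · rw [← C.hull, ← C.tri.2.1]
      ext x
      constructor
      · intro hx
        obtain ⟨s, hs, hxs⟩ := SimplicialComplex.mem_space_iff.1 hx
        rcases (hF s).1 hs with ⟨hs, -⟩ | ⟨t, ht, rfl⟩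
        · exact SimplicialComplex.convexHull_subset_space hs hxs
        · exact SimplicialComplex.convexHull_subset_space hf (I.hull_insert_subset ht.1 hxs)
      · intro hx
        obtain ⟨s, hs, hxs⟩ := SimplicialComplex.mem_space_iff.1 hx
        by_cases hsD : s = D
        · rw [hsD] at hxs
          obtain ⟨j, hj, hxj⟩ := I.exists_cone hxs
          exact SimplicialComplex.mem_space_iff.2
            ⟨_, (hF _).2 (Or.inr ⟨_, Finset.erase_ssubset hj, rfl⟩), hxj⟩
        · exact SimplicialComplex.mem_space_iff.2 ⟨s, (hF s).2 (Or.inl ⟨hs, hsD⟩), hxs⟩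
    · ext x
      have hiff : x ∈ T.vertices ↔ {x} ∈ F := Iff.rfl
      rw [hiff, hF]
      have hx1 : ({x} : Finset Plane) ≠ D := by
        rintro h; rw [← h] at hc3; simp at hc3
      have hv : {x} ∈ T'.faces ↔ x ∈ A.erase p := by
        have : x ∈ T'.vertices ↔ x ∈ ((A.erase p : Finset Plane) : Set Plane) := by rw [C.tri.2.2]
        exact this
      rw [hv]
      constructor
      · rintro (⟨h, -⟩ | ⟨t, ht, h⟩)
        · exact Finset.mem_of_mem_erase h
        · have : p ∈ ({x} : Finset Plane) := by rw [h]; simp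
          rw [Finset.mem_singleton] at this
          rw [← this]; exact C.hp
      · intro hxA
        by_cases hxp : x = p
        · refine Or.inr ⟨∅, Finset.empty_ssubset.2 (Finset.card_pos.1 (by omega)), ?_⟩
          rw [hxp]; simp
        · exact Or.inl ⟨Finset.mem_erase.2 ⟨hxp, hxA⟩, hx1⟩
  refine ⟨T, ⟨hT, ?_⟩, ?_⟩
  · intro s hs _ hps
    rcases (hF s).1 hs with ⟨hs, -⟩ | ⟨t, ht, rfl⟩
    · exact hs
    · simp at hps
  · rw [degree_eq_card_nbrs hT, ← hc3]
    congr 1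
    ext v
    rw [mem_nbrs]
    have hiff : {p, v} ∈ T.faces ↔ {p, v} ∈ F := Iff.rfl
    rw [hiff, hF]
    constructor
    · rintro ⟨-, hvp, ⟨h, -⟩ | ⟨t, ht, h⟩⟩
      · exact absurd (by simp) (hpT' _ h)
      · have : v ∈ insert p t := by rw [← h]; simp
        exact ht.1 (by simpa [hvp] using this)
    · intro hv
      refine ⟨hDA hv, (C.mem_erase hf hv).2, Or.inr ⟨{v}, ⟨by simpa using hv, fun h => ?_⟩, rfl⟩⟩
      have := Finset.card_le_card h
      rw [hc3] at this
      simp at this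

/-- Removing an interior point does not change the convex hull: a point `q` of the smaller hull
and the point slightly beyond `p` on the ray from `q` both lie in `conv A`, and the latter is a
combination of `p` and a point of the smaller hull. -/
theorem of_interior (hgen : InGeneralPosition A) (hp : p ∈ A)
    (hpint : p ∈ interior (convexHull ℝ (A : Set Plane)))
    (hT' : IsTriangulation (A.erase p) T') : Ctx A p T' := by
  have hins : (A : Set Plane) = insert p ((A.erase p : Finset Plane) : Set Plane) := by
    rw [← Finset.coe_insert, Finset.insert_erase hp]
  have hne : (A.erase p).Nonempty := by
    rw [Finset.nonempty_iff_ne_empty]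
    intro h
    rw [h] at hins
    simp only [Finset.coe_empty, insert_empty_eq] at hins
    rw [hins] at hpint
    have := Module.punctured_nhds_neBot ℝ Plane p
    simp at hpint
  have hmem : p ∈ convexHull ℝ ((A.erase p : Finset Plane) : Set Plane) := by
    obtain ⟨q, hq⟩ := hne
    have hcont : Continuous fun ε : ℝ => p + ε • (p - q) := by fun_prop
    have ht := hcont.tendsto 0
    simp only [zero_smul, add_zero] at ht
    obtain ⟨ε, hε, hε0⟩ := (((ht.mono_left nhdsWithin_le_nhds).eventually
      (mem_interior_iff_mem_nhds.1 hpint)).and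
        (self_mem_nhdsWithin (s := Set.Ioi (0 : ℝ)))).exists
    have hε0 : 0 < ε := hε0
    have hε : p + ε • (p - q) ∈ convexHull ℝ (A : Set Plane) := hε
    rw [hins, convexHull_insert ⟨q, hq⟩, mem_convexJoin] at hε
    obtain ⟨p', hp', b, hb, u, v, hu, hv, huv, he⟩ := hε
    obtain rfl : p' = p := hp'
    have hpos : 0 < ε + v := by linarith
    have : p' = (v / (ε + v)) • b + (ε / (ε + v)) • q := by
      have h1 : (ε + v) • p' = v • b + ε • q := by
        have hu' : u = 1 - v := by linarith
        rw [hu'] at he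
        have he' : v • b = p' + ε • (p' - q) - (1 - v) • p' := by rw [← he]; abel
        rw [he']; module
      rw [div_eq_inv_mul, div_eq_inv_mul, mul_smul, mul_smul, ← smul_add, ← h1,
        inv_smul_smul₀ hpos.ne']
    have hseg := convex_convexHull ℝ _ hb (subset_convexHull ℝ _ hq)
      (show 0 ≤ v / (ε + v) by positivity) (show 0 ≤ ε / (ε + v) by positivity)
      (by rw [← add_div, add_comm v ε, div_self hpos.ne'])
    rwa [← this] at hseg
  refine ⟨hgen, hp, hT', (convexHull_mono (by simp)).antisymm ?_⟩
  refine convexHull_min ?_ (convex_convexHull ℝ _)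
  rw [hins]
  exact Set.insert_subset hmem (subset_convexHull ℝ _)

end Ctx

theorem catalan_four : catalan 4 = 14 := by
  rw [catalan_eq_centralBinom_div]; decide

theorem catalan_five : catalan 5 = 42 := by
  rw [catalan_eq_centralBinom_div]; decide

theorem insertion_count_bounds_interior_point
    (A : Finset Plane)
    (hgen : InGeneralPosition A)
    (hdim : affineSpan ℝ (A : Set Plane) = ⊤)
    (p : Plane) (hp : p ∈ A)
    (hpint : p ∈ interior (convexHull ℝ (A : Set Plane)))
    (T' : SimplicialComplex ℝ Plane)
    (hT' : IsTriangulation (A.erase p) T')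
    (h : ℕ → ℕ)
    (hh : ∀ i, h i = Nat.card {T : SimplicialComplex ℝ Plane |
      ObtainedByInserting A p T' T ∧ degree T p = i}) :
    (∀ i, 3 ≤ i → h i ≤ catalan (i - 1) - catalan (i - 2)) ∧
    h 3 = 1 ∧ h 4 ≤ 3 ∧ h 5 ≤ 9 ∧ h 6 ≤ 28 := by
  have C : Ctx A p T' := Ctx.of_interior hgen hp hpint hT'
  have bound : ∀ n, h (n + 3) ≤ catalan (n + 2) - catalan (n + 1) := by
    intro n
    obtain ⟨f, hf⟩ := C.exists_injective (n + 3)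
    rw [hh]
    refine (Nat.card_le_card_of_injective f hf).trans ?_
    rw [Nat.card_eq_fintype_card, Fintype.card_coe]
    exact C.card_nbrSets_le n
  have h3 : 1 ≤ h 3 := by
    obtain ⟨f, hf⟩ := C.exists_injective 3
    obtain ⟨T, hT, hd⟩ := C.exists_degree_three
    have := Finite.of_injective f hf
    have : Nonempty {T : SimplicialComplex ℝ Plane |
      ObtainedByInserting A p T' T ∧ degree T p = 3} := ⟨⟨T, hT, hd⟩⟩
    rw [hh]
    exact Nat.card_pos
  have b3 := bound 0
  have b4 := bound 1
  have b5 := bound 2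
  have b6 := bound 3
  simp only [catalan_one, catalan_two, catalan_three, catalan_four, catalan_five, Nat.reduceAdd,
    zero_add, Nat.reduceSub] at b3 b4 b5 b6
  refine ⟨fun i hi => ?_, le_antisymm b3 h3, b4, b5, b6⟩
  obtain ⟨n, rfl⟩ := Nat.exists_eq_add_of_le' hi
  exact bound n
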